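/- arXiv:1308.4995 — 6 statements merged into one kernel-verified Lean document; each statement's English description precedes it below -/
import Mathlib

section
/- Let E be a complex Banach space, let T ∈ B(E) be a nonzero operator, and let λ ∈ ℂ be an extended eigenvalue of T such that the subspace 𝒳 = {X ∈ B(E) : TX = λXT} of all associated extended eigenoperators (together with 0) is localizing. Suppose that either (1) |λ| < 1, or (2) |λ| > 1, or (3) |λ| = 1 and T is quasinilpotent (its spectral radius is 0). Then T has a nontrivial hyperinvariant subspace, i.e. there exists a closed linear subspace F of E with F ≠ {0} and F ≠ E such that SF ⊆ F for every S ∈ B(E) with ST = TS. -/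
open Filter Topology

/-- A linear subspace `𝒳 ⊆ B(E)` is *localizing* if there exists a closed ball `B ⊆ E`
with `0 ∉ B` such that for every sequence in `B` there are a subsequence and operators
`X_j ∈ 𝒳` with `‖X_j‖ ≤ 1` such that `X_j x_{n_j}` converges in norm to a nonzero vector. -/
def IsLocalizing {E : Type*} [NormedAddCommGroup E] [NormedSpace ℂ E]
    (𝒳 : Set (E →L[ℂ] E)) : Prop :=
  ∃ (c : E) (r : ℝ), 0 < r ∧ (0 : E) ∉ Metric.closedBall c r ∧
    ∀ x : ℕ → E, (∀ n, x n ∈ Metric.closedBall c r) →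
      ∃ (n : ℕ → ℕ) (X : ℕ → E →L[ℂ] E) (y : E), StrictMono n ∧
        (∀ j, X j ∈ 𝒳) ∧ (∀ j, ‖X j‖ ≤ 1) ∧ y ≠ 0 ∧
        Tendsto (fun j => X j (x (n j))) atTop (𝓝 y)

/-- The orbit of `y` under the commutant of `T`. -/
def commOrbit {E : Type*} [NormedAddCommGroup E] [NormedSpace ℂ E]
    (T : E →L[ℂ] E) (y : E) : Submodule ℂ E where
  carrier := {z | ∃ S : E →L[ℂ] E, S ∘L T = T ∘L S ∧ S y = z}
  zero_mem' := ⟨0, by simp, by simp⟩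
  add_mem' := by
    rintro a b ⟨S, hS, rfl⟩ ⟨R, hR, rfl⟩
    exact ⟨S + R, by rw [ContinuousLinearMap.add_comp, ContinuousLinearMap.comp_add, hS, hR],
      by simp⟩
  smul_mem' := by
    rintro a b ⟨S, hS, rfl⟩
    exact ⟨a • S, by rw [ContinuousLinearMap.smul_comp, ContinuousLinearMap.comp_smul, hS],
      by simp⟩

lemma tendsto_zero_of_rec (a : ℕ → ℝ) (D q : ℝ) (hq0 : 0 ≤ q) (hq1 : q < 1)
    (ha : ∀ n, a (n + 1) = D * q ^ n * a n) : Tendsto a atTop (𝓝 0) := by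
  have h1 : Tendsto (fun n : ℕ => |D| * q ^ n) atTop (𝓝 0) := by
    simpa using (tendsto_pow_atTop_nhds_zero_of_lt_one hq0 hq1).const_mul |D|
  have h2 : ∀ᶠ n : ℕ in atTop, |D| * q ^ n ≤ 1 / 2 :=
    (h1.eventually_lt_const (by norm_num : (0 : ℝ) < 1 / 2)).mono fun _ h => h.le
  refine (summable_of_ratio_norm_eventually_le (r := 1 / 2) (by norm_num) ?_).tendsto_atTop_zero
  filter_upwards [h2] with n hn
  rw [ha, norm_mul, norm_mul, Real.norm_eq_abs D, Real.norm_of_nonneg (pow_nonneg hq0 n)]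
  gcongr

lemma tendsto_zero_of_quasinilpotent {E : Type*} [NormedAddCommGroup E] [NormedSpace ℂ E]
    [CompleteSpace E] (T : E →L[ℂ] E) (h : spectralRadius ℂ T = 0) (C : ℝ) (hC : 0 < C) :
    Tendsto (fun n => C ^ n * ‖T ^ n‖) atTop (𝓝 0) := by
  have h1 := spectrum.pow_norm_pow_one_div_tendsto_nhds_spectralRadius T
  rw [h] at h1
  have h2 : ∀ᶠ n : ℕ in atTop, ENNReal.ofReal (‖T ^ n‖ ^ (1 / n : ℝ)) < ENNReal.ofReal (1 / (2 * C)) :=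
    h1.eventually_lt_const (by rw [ENNReal.ofReal_pos]; positivity)
  have h3 : Tendsto (fun n : ℕ => (1 / 2 : ℝ) ^ n) atTop (𝓝 0) :=
    tendsto_pow_atTop_nhds_zero_of_lt_one (by norm_num) (by norm_num)
  refine tendsto_of_tendsto_of_tendsto_of_le_of_le' tendsto_const_nhds h3 ?_ ?_
  · exact Eventually.of_forall fun n => by positivity
  · filter_upwards [h2, eventually_ge_atTop 1] with n hn hn1
    rw [ENNReal.ofReal_lt_ofReal_iff (by positivity)] at hn
    have h4 : (‖T ^ n‖ ^ (1 / n : ℝ)) ^ n ≤ (1 / (2 * C)) ^ n :=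
      pow_le_pow_left₀ (by positivity) hn.le n
    rw [one_div (n : ℝ), Real.rpow_inv_natCast_pow (norm_nonneg _) (by omega)] at h4
    calc C ^ n * ‖T ^ n‖ ≤ C ^ n * (1 / (2 * C)) ^ n := by gcongr
      _ = (1 / 2) ^ n := by
        rw [← mul_pow]; congr 1; field_simp

/-- If `T ≠ 0` has an extended eigenvalue `λ` whose space of extended eigenoperators is
localizing, and `|λ| < 1`, `|λ| > 1`, or `|λ| = 1` with `T` quasinilpotent, then `T` has a
nontrivial hyperinvariant subspace. -/
theorem hyperinvariant_of_localizing_extended_eigenoperators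
    {E : Type*} [NormedAddCommGroup E] [NormedSpace ℂ E] [CompleteSpace E]
    (T : E →L[ℂ] E) (hT0 : T ≠ 0) (l : ℂ)
    (hev : ∃ X : E →L[ℂ] E, X ≠ 0 ∧ T ∘L X = l • (X ∘L T))
    (hloc : IsLocalizing {X : E →L[ℂ] E | T ∘L X = l • (X ∘L T)})
    (hl : ‖l‖ < 1 ∨ 1 < ‖l‖ ∨ (‖l‖ = 1 ∧ spectralRadius ℂ T = 0)) :
    ∃ F : Submodule ℂ E, IsClosed (F : Set E) ∧ F ≠ ⊥ ∧ F ≠ ⊤ ∧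
      ∀ S : E →L[ℂ] E, S ∘L T = T ∘L S → ∀ x ∈ F, S x ∈ F := by
  by_contra hno
  push Not at hno
  have hinj : ∀ y, y ≠ 0 → T y ≠ 0 := by
    intro y hy hTy
    obtain ⟨S, hS, x, hx, hSx⟩ := hno T.ker (T.isClosed_ker)
      (fun hb => hy (by
        have : y ∈ T.ker := hTy
        rw [hb] at this
        simpa using this))
      (fun hb => hT0 (by
        ext z
        have : z ∈ T.ker := by rw [hb]; trivial
        exact this))
    apply hSx
    have hx' : T x = 0 := hx
    have := DFunLike.congr_fun hS x
    simp only [ContinuousLinearMap.comp_apply, hx', map_zero] at this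
    exact this.symm
  have hdense : ∀ y, y ≠ 0 → (commOrbit T y).topologicalClosure = ⊤ := by
    intro y hy
    by_contra hne
    obtain ⟨S, hS, x, hx, hSx⟩ := hno (commOrbit T y).topologicalClosure
      (Submodule.isClosed_topologicalClosure _)
      (fun hb => hy (by
        have : y ∈ (commOrbit T y).topologicalClosure :=
          Submodule.le_topologicalClosure _ ⟨ContinuousLinearMap.id ℂ E, by ext; simp, by simp⟩
        rw [hb] at this
        simpa using this)) hne
    apply hSx
    refine map_mem_closure S.continuous hx ?_
    rintro z ⟨R, hR, rfl⟩
    refine ⟨S ∘L R, ?_, rfl⟩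
    rw [ContinuousLinearMap.comp_assoc, hR, ← ContinuousLinearMap.comp_assoc, hS,
      ContinuousLinearMap.comp_assoc]
  obtain ⟨c, r, hr, h0, hseq⟩ := hloc
  have hC : ∃ N : ℕ, ∀ x ∈ Metric.closedBall c r, ∃ Z : E →L[ℂ] E,
      T ∘L Z = l • (Z ∘L T) ∧ ‖Z‖ ≤ N ∧ T (Z x) ∈ Metric.closedBall c r := by
    by_contra hcon
    push Not at hcon
    choose x hxB hx using hcon
    obtain ⟨n, X, y, hn, hX, hX1, hy, hlim⟩ := hseq x hxB
    have hd := hdense (T y) (hinj y hy)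
    have hcm : c ∈ closure ((commOrbit T (T y) : Submodule ℂ E) : Set E) := by
      have : c ∈ (commOrbit T (T y)).topologicalClosure := by rw [hd]; trivial
      exact this
    obtain ⟨_, ⟨S, hS, rfl⟩, hSd⟩ := Metric.mem_closure_iff.1 hcm r hr
    have hS' : ∀ z, S (T z) = T (S z) := fun z => DFunLike.congr_fun hS z
    have hlim2 : Tendsto (fun j => T (S (X j (x (n j))))) atTop (𝓝 (T (S y))) :=
      (T.continuous.tendsto _).comp ((S.continuous.tendsto _).comp hlim)
    rw [← hS'] at hlim2
    have hev1 : ∀ᶠ j in atTop, T (S (X j (x (n j)))) ∈ Metric.ball c r :=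
      hlim2.eventually (Metric.isOpen_ball.mem_nhds (by rw [Metric.mem_ball, dist_comm]; exact hSd))
    obtain ⟨N, hN⟩ := exists_nat_ge ‖S‖
    obtain ⟨j, hj1, hj2⟩ := (hev1.and (eventually_ge_atTop N)).exists
    refine hx (n j) (S ∘L X j) ?_ ?_ (Metric.ball_subset_closedBall hj1)
    · have hXj : T ∘L X j = l • (X j ∘L T) := hX j
      rw [← ContinuousLinearMap.comp_assoc, ← hS, ContinuousLinearMap.comp_assoc, hXj,
        ContinuousLinearMap.comp_smul, ContinuousLinearMap.comp_assoc]
    · calc ‖S ∘L X j‖ ≤ ‖S‖ * ‖X j‖ := ContinuousLinearMap.opNorm_comp_le _ _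
        _ ≤ ‖S‖ * 1 := by gcongr; exact hX1 j
        _ ≤ (N : ℝ) := by simpa using hN
        _ ≤ (n j : ℝ) := by exact_mod_cast hj2.trans (hn.id_le j)
  obtain ⟨N, hN⟩ := hC
  set C : ℝ := N + 1 with hCdef
  have hCpos : 0 < C := by positivity
  -- it suffices to produce arbitrarily small vectors in the ball
  have hfin : ∀ b : ℕ → ℝ, Tendsto b atTop (𝓝 0) →
      (∀ n, ∃ x ∈ Metric.closedBall c r, ‖x‖ ≤ b n) → False := by
    intro b hb hx
    choose x hxB hx using hx
    have : Tendsto x atTop (𝓝 0) := squeeze_zero_norm hx hb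
    exact h0 (Metric.isClosed_closedBall.mem_of_tendsto this (Eventually.of_forall hxB))
  have hcB : c ∈ Metric.closedBall c r := Metric.mem_closedBall_self hr.le
  have hstep1 : ∀ (a : ℕ → ℝ), a 0 = 1 → (∀ n, a (n + 1) = C * ‖l‖ ^ (n + 1) * a n) →
      ∀ n, ∃ W : E →L[ℂ] E, (∀ z, T (W z) = l ^ n • W (T z)) ∧ ‖W‖ ≤ a n ∧
        W ((T ^ n) c) ∈ Metric.closedBall c r := by
    intro a ha0 ha n
    induction n with
    | zero =>
      exact ⟨ContinuousLinearMap.id ℂ E, by simp,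
        by rw [ha0]; exact ContinuousLinearMap.norm_id_le, by simpa using hr.le⟩
    | succ n ih =>
      obtain ⟨W, hW, hWn, hWB⟩ := ih
      obtain ⟨Z, hZ, hZn, hZB⟩ := hN _ hWB
      have hZ' : ∀ z, T (Z z) = l • Z (T z) := fun z => DFunLike.congr_fun hZ z
      refine ⟨l ^ (n + 1) • (Z ∘L W), ?_, ?_, ?_⟩
      · intro z
        simp only [ContinuousLinearMap.smul_apply, ContinuousLinearMap.comp_apply, map_smul,
          hZ', hW, smul_smul]
        congr 1
        ring
      · rw [norm_smul, norm_pow, ha]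
        have h1 : ‖Z ∘L W‖ ≤ C * a n :=
          (ContinuousLinearMap.opNorm_comp_le _ _).trans
            (mul_le_mul (by linarith) hWn (norm_nonneg _) hCpos.le)
        calc ‖l‖ ^ (n + 1) * ‖Z ∘L W‖ ≤ ‖l‖ ^ (n + 1) * (C * a n) := by gcongr
          _ = _ := by ring
      · convert hZB using 1
        rw [hZ', hW, pow_succ' T]
        simp only [ContinuousLinearMap.smul_apply, ContinuousLinearMap.comp_apply, map_smul,
          smul_smul, ContinuousLinearMap.mul_apply]
        congr 1
        ring
  have hbd1 : ∀ (a : ℕ → ℝ), a 0 = 1 → (∀ n, a (n + 1) = C * ‖l‖ ^ (n + 1) * a n) →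
      ∀ n, ∃ x ∈ Metric.closedBall c r, ‖x‖ ≤ a n * ‖T ^ n‖ * ‖c‖ := by
    intro a ha0 ha n
    obtain ⟨W, -, hWn, hWB⟩ := hstep1 a ha0 ha n
    refine ⟨_, hWB, ?_⟩
    calc ‖W ((T ^ n) c)‖ ≤ ‖W‖ * (‖T ^ n‖ * ‖c‖) :=
          (W.le_opNorm _).trans (by gcongr; exact (T ^ n).le_opNorm _)
      _ ≤ a n * (‖T ^ n‖ * ‖c‖) := by gcongr
      _ = _ := by ring
  have hTn : ∀ n, ‖T ^ n‖ ≤ ‖T‖ ^ n := by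
    intro n
    induction n with
    | zero => rw [pow_zero, pow_zero]; exact ContinuousLinearMap.norm_id_le
    | succ n ih =>
      rw [pow_succ, pow_succ]
      exact (norm_mul_le _ _).trans (by gcongr)
  rcases hl with hl | hl | ⟨hl, hqn⟩
  · let a : ℕ → ℝ := fun n => Nat.rec 1 (fun n v => C * ‖l‖ ^ (n + 1) * v) n
    have ha0 : a 0 = 1 := rfl
    have ha : ∀ n, a (n + 1) = C * ‖l‖ ^ (n + 1) * a n := fun n => rfl
    have hapos : ∀ n, 0 ≤ a n := by
      intro n
      induction n with
      | zero => rw [ha0]; norm_num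
      | succ n ih => rw [ha]; positivity
    refine hfin (fun n => a n * ‖T‖ ^ n * ‖c‖)
      (tendsto_zero_of_rec _ (C * ‖l‖ * ‖T‖) ‖l‖ (norm_nonneg _) hl
        (fun n => by simp only [ha]; ring)) ?_
    intro n
    obtain ⟨x, hxB, hx⟩ := hbd1 a ha0 ha n
    refine ⟨x, hxB, hx.trans ?_⟩
    have := hTn n
    have := hapos n
    gcongr
  · have hl0 : l ≠ 0 := by
      rintro rfl
      simp at hl
      linarith
    let a : ℕ → ℝ := fun n => Nat.rec 1 (fun n v => C * ‖l⁻¹‖ ^ n * v) n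
    have ha0 : a 0 = 1 := rfl
    have ha : ∀ n, a (n + 1) = C * ‖l⁻¹‖ ^ n * a n := fun n => rfl
    have hapos : ∀ n, 0 ≤ a n := by
      intro n
      induction n with
      | zero => rw [ha0]; norm_num
      | succ n ih => rw [ha]; positivity
    have hstep2 : ∀ n, ∃ W : E →L[ℂ] E, ‖W‖ ≤ a n ∧
        (T ^ n) (W c) ∈ Metric.closedBall c r := by
      intro n
      induction n with
      | zero =>
        exact ⟨ContinuousLinearMap.id ℂ E,
          by rw [ha0]; exact ContinuousLinearMap.norm_id_le, by simpa using hr.le⟩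
      | succ n ih =>
        obtain ⟨W, hWn, hWB⟩ := ih
        obtain ⟨Z, hZ, hZn, hZB⟩ := hN _ hWB
        have hZ' : ∀ z, Z (T z) = l⁻¹ • T (Z z) := fun z => by
          have : T (Z z) = l • Z (T z) := DFunLike.congr_fun hZ z
          rw [this, smul_smul, inv_mul_cancel₀ hl0, one_smul]
        have hZn' : ∀ (k : ℕ) (z : E), Z ((T ^ k) z) = (l⁻¹) ^ k • (T ^ k) (Z z) := by
          intro k
          induction k with
          | zero => intro z; simp
          | succ k ih =>
            intro z
            rw [pow_succ' T]
            simp only [ContinuousLinearMap.mul_apply, hZ', ih, map_smul, smul_smul]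
            congr 1
            ring
        refine ⟨(l⁻¹) ^ n • (Z ∘L W), ?_, ?_⟩
        · rw [norm_smul, norm_pow, ha]
          have h1 : ‖Z ∘L W‖ ≤ C * a n :=
            (ContinuousLinearMap.opNorm_comp_le _ _).trans
              (mul_le_mul (by linarith) hWn (norm_nonneg _) hCpos.le)
          calc ‖l⁻¹‖ ^ n * ‖Z ∘L W‖ ≤ ‖l⁻¹‖ ^ n * (C * a n) := by gcongr
            _ = _ := by ring
        · convert hZB using 1
          rw [hZn', pow_succ' T]
          simp only [ContinuousLinearMap.smul_apply, ContinuousLinearMap.comp_apply, map_smul,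
            ContinuousLinearMap.mul_apply]
    refine hfin (fun n => a n * ‖T‖ ^ n * ‖c‖)
      (tendsto_zero_of_rec _ (C * ‖T‖) ‖l⁻¹‖ (norm_nonneg _)
        (by rw [norm_inv]; exact inv_lt_one_of_one_lt₀ hl)
        (fun n => by simp only [ha]; ring)) ?_
    intro n
    obtain ⟨W, hWn, hWB⟩ := hstep2 n
    refine ⟨_, hWB, ?_⟩
    have := hTn n
    have := hapos n
    calc ‖(T ^ n) (W c)‖ ≤ ‖T ^ n‖ * (‖W‖ * ‖c‖) :=
          ((T ^ n).le_opNorm _).trans (by gcongr; exact W.le_opNorm _)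
      _ ≤ ‖T‖ ^ n * (a n * ‖c‖) := by gcongr
      _ = _ := by ring
  · refine hfin (fun n => C ^ n * ‖T ^ n‖ * ‖c‖) ?_
      (hbd1 (fun n => C ^ n) (by simp) (fun n => by simp only [hl]; ring))
    simpa using (tendsto_zero_of_quasinilpotent T hqn C hCpos).mul_const ‖c‖
end

section
/- Let (z_k) be a sequence of complex numbers in the open unit disc 𝔻 such that the closure of {z_k : k ≥ 1} contains the unit circle ∂𝔻 and is disjoint from the interval [0,1/2], let μ be the measure on ℂ given by μ = λ|_{[0,1/2]} + Σ_{k≥1} 2^{-k-1} δ_{z_k} (Lebesgue measure restricted to [0,1/2] plus weighted Dirac masses at the z_k), and let 𝓡 = {p(M_z) : p a polynomial} ⊆ B(L²(μ)), where M_z is multiplication by the identity function. Then 𝓡 is not a localizing algebra on the Hilbert space L²(μ). -/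
open Filter Topology MeasureTheory

/-- The measure `μ = λ|_{[0,1/2]} + ∑_{k≥1} 2^{-k-1} δ_{z_k}` on `ℂ` (the sequence is
indexed here by `k : ℕ` starting at `0`, with weights `2^{-(k+2)} = 2^{-(k+1)-1}`). -/
noncomputable def paperMeasure (z : ℕ → ℂ) : Measure ℂ :=
  Measure.map Complex.ofReal (volume.restrict (Set.Icc 0 (1/2))) +
    Measure.sum (fun k : ℕ => ((2 : ENNReal) ^ (k + 2))⁻¹ • Measure.dirac (z k))

theorem aux_iter (p : Polynomial ℂ) (n : ℕ) :
    iteratedDeriv n (fun w => p.eval w) = fun w => (Polynomial.derivative^[n] p).eval w := by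
  induction n with
  | zero => simp
  | succ k ih =>
    rw [iteratedDeriv_succ, ih, Function.iterate_succ_apply']
    funext w
    exact Polynomial.deriv _

theorem aux_coeff (p : Polynomial ℂ) (hp : ∀ w ∈ Metric.sphere (0 : ℂ) 1, ‖p.eval w‖ ≤ 1) (n : ℕ) :
    ‖p.coeff n‖ ≤ 1 := by
  have h := Complex.norm_iteratedDeriv_le_of_forall_mem_sphere_norm_le (f := fun w => p.eval w) n
    one_pos (p.differentiable.diffContOnCl) hp
  rw [aux_iter] at h
  simp only [← Polynomial.coeff_zero_eq_eval_zero, Polynomial.coeff_iterate_derivative] at h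
  rw [zero_add, Nat.descFactorial_self, nsmul_eq_mul, norm_mul] at h
  simp only [Complex.norm_natCast, one_pow, div_one] at h
  exact le_of_mul_le_mul_left h (by positivity)

theorem aux_eval (p : Polynomial ℂ) (w : ℂ) : p.eval w = ∑' n, p.coeff n * w ^ n := by
  rw [Polynomial.eval_eq_sum_range, tsum_eq_sum]
  intro b hb
  rw [Polynomial.coeff_eq_zero_of_natDegree_lt, zero_mul]
  simpa [Nat.lt_succ_iff] using hb

theorem aux_montel (p : ℕ → Polynomial ℂ) (hp : ∀ j n, ‖(p j).coeff n‖ ≤ 1) :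
    ∃ (φ : ℕ → ℕ) (a : ℕ → ℂ), StrictMono φ ∧ (∀ n, ‖a n‖ ≤ 1) ∧ ∀ w : ℂ, ‖w‖ < 1 →
      Tendsto (fun j => (p (φ j)).eval w) atTop (𝓝 (∑' n, a n * w ^ n)) := by
  have hc : IsCompact (Set.univ.pi fun _ : ℕ => Metric.closedBall (0 : ℂ) 1) :=
    isCompact_univ_pi fun _ => isCompact_closedBall _ _
  obtain ⟨a, ha, φ, hφ, ht⟩ := hc.tendsto_subseq (x := fun j n => (p j).coeff n)
    (fun j n _ => by simpa using hp j n)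
  refine ⟨φ, a, hφ, fun n => by simpa using ha n trivial, fun w hw => ?_⟩
  simp_rw [aux_eval]
  refine tendsto_tsum_of_dominated_convergence (bound := fun n => ‖w‖ ^ n)
    (summable_geometric_of_lt_one (norm_nonneg _) hw) (fun k => ?_) (Eventually.of_forall fun j k => ?_)
  · exact ((tendsto_pi_nhds.1 ht k)).mul_const _
  · rw [norm_mul, norm_pow]
    exact mul_le_of_le_one_left (by positivity) (hp _ _)

theorem aux_iso (a : ℕ → ℂ) (ha : ∀ n, ‖a n‖ ≤ 1) :
    (∀ n, a n = 0) ∨ ∀ᶠ w in 𝓝[≠] (0 : ℂ), ∑' n, a n * w ^ n ≠ 0 := by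
  let q := FormalMultilinearSeries.ofScalars ℂ a
  have hr : ((1 : NNReal) : ENNReal) ≤ q.radius := by
    apply q.le_radius_of_bound 1
    intro n
    simpa [q] using ha n
  have hq := q.hasFPowerSeriesOnBall (lt_of_lt_of_le (by simp) hr)
  have hs : ∀ w, q.sum w = ∑' n, a n * w ^ n := fun w => by
    have h := FormalMultilinearSeries.ofScalars_sum_eq a w
    simp only [smul_eq_mul] at h
    exact h
  rcases hq.analyticAt.eventually_eq_zero_or_eventually_ne_zero with h | h
  · left
    have h0 := hq.hasFPowerSeriesAt.eq_zero_of_eventually h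
    intro n
    have := FormalMultilinearSeries.coeff_ofScalars (𝕜 := ℂ) (p := a) (n := n)
    rw [← this]
    change q.coeff n = 0
    rw [h0]; rfl
  · right
    simpa only [hs] using h

theorem aux_nc (s : ℝ) : ‖(Real.fourierChar s : ℂ)‖ = 1 := Circle.norm_coe _

theorem aux_RL (m : ℕ → ℕ) (hm : StrictMono m) (δ : ℝ) (hδ : 0 < δ)
    (h : ∀ᵐ t : ℝ, t ∈ Set.Ioo 0 δ →
      ∃ g : ℂ, Tendsto (fun j => (Real.fourierChar ((m j : ℝ) * t) : ℂ)) atTop (𝓝 g)) : False := by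
  let f : ℝ → ℂ := (Set.Ioo 0 δ).indicator 1
  have hd : Tendsto (fun j => (m (2 * j) : ℝ) - m j) atTop atTop := by
    refine tendsto_atTop_mono (fun j => ?_) tendsto_natCast_atTop_atTop
    have : m j + j ≤ m (2 * j) := by
      have := hm.add_le_nat j j
      rw [two_mul]; omega
    have : (m j : ℝ) + j ≤ m (2 * j) := by exact_mod_cast this
    linarith
  have h1 := (Real.tendsto_integral_exp_smul_cocompact f).comp
    (hd.mono_right atTop_le_cocompact)
  have hfi : Integrable f := by
    refine (integrable_indicator_iff measurableSet_Ioo).2 ?_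
    exact integrableOn_const (by simp)
  have h2 : Tendsto (fun j : ℕ => ∫ v : ℝ,
      Real.fourierChar (-(v * ((m (2 * j) : ℝ) - m j))) • f v) atTop (𝓝 (∫ v, f v)) := by
    refine tendsto_integral_of_dominated_convergence (fun v => ‖f v‖) (fun j => ?_) hfi.norm
      (fun j => ?_) ?_
    · refine AEStronglyMeasurable.smul (Continuous.aestronglyMeasurable ?_) hfi.1
      fun_prop
    · exact Eventually.of_forall fun v => by simp
    · filter_upwards [h] with t ht
      by_cases hI : t ∈ Set.Ioo 0 δ
      · obtain ⟨g, hg⟩ := ht hI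
        have hg1 : ‖g‖ = 1 := by
          refine tendsto_nhds_unique hg.norm ?_
          simp only [aux_nc]
          exact tendsto_const_nhds
        have hg0 : g ≠ 0 := by rintro rfl; simp at hg1
        have hg2 := hg.comp (tendsto_id.const_mul_atTop' (r := 2) (by norm_num))
        have := (hg.div hg2 hg0).mul_const (f t)
        rw [div_self hg0, one_mul] at this
        refine this.congr fun j => ?_
        rw [Circle.smul_def, smul_eq_mul]
        congr 1
        simp only [Function.comp, id, Pi.div_apply]
        rw [← Circle.coe_div, ← AddChar.map_sub_eq_div]
        congr 2; ring
      · have : f t = 0 := Set.indicator_of_notMem hI _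
        simp [this]
  have h3 := tendsto_nhds_unique h1 h2
  have h4 : ∫ v, f v = δ := by
    rw [integral_indicator measurableSet_Ioo]
    simp [hδ.le]
  rw [h4] at h3
  exact hδ.ne (by exact_mod_cast h3)

theorem aux_finite (z : ℕ → ℂ) : IsFiniteMeasure (paperMeasure z) := by
  have : IsFiniteMeasure (Measure.sum
      (fun k : ℕ => ((2 : ENNReal) ^ (k + 2))⁻¹ • Measure.dirac (z k))) := by
    constructor
    rw [Measure.sum_apply _ MeasurableSet.univ]
    simp only [Measure.smul_apply, measure_univ, smul_eq_mul, mul_one]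
    have : ∀ k : ℕ, ((2 : ENNReal) ^ (k + 2))⁻¹ ≤ (2⁻¹ : ENNReal) ^ k := fun k => by
      rw [← ENNReal.inv_pow]
      apply ENNReal.inv_le_inv.2
      exact pow_le_pow_right₀ (by norm_num) (by omega)
    refine lt_of_le_of_lt (ENNReal.tsum_le_tsum this) ?_
    rw [ENNReal.tsum_geometric]
    simp
  have : IsFiniteMeasure (Measure.map Complex.ofReal (volume.restrict (Set.Icc (0:ℝ) (1/2)))) :=
    inferInstance
  unfold paperMeasure
  infer_instance

theorem aux_ae (z : ℕ → ℂ) {P : ℂ → Prop} (h : ∀ᵐ w ∂paperMeasure z, P w) :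
    (∀ k, P (z k)) ∧ ∀ᵐ t : ℝ, t ∈ Set.Icc (0 : ℝ) (1/2) → P t := by
  unfold paperMeasure at h
  rw [ae_add_measure_iff] at h
  constructor
  · intro k
    have h1 := (Measure.ae_sum_iff.1 h.2) k
    rw [Measure.ae_ennreal_smul_measure_iff (by simp)] at h1
    rwa [ae_dirac_eq] at h1
  · have := ae_of_ae_map (by fun_prop) h.1
    rwa [ae_restrict_iff' measurableSet_Icc] at this

theorem aux_ae' (z : ℕ → ℂ) {P : ℂ → Prop} (h1 : ∀ k, P (z k))
    (h2 : ∀ t ∈ Set.Icc (0 : ℝ) (1/2), P t) (hP : MeasurableSet {w | P w}) :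
    ∀ᵐ w ∂paperMeasure z, P w := by
  unfold paperMeasure
  rw [ae_add_measure_iff]
  constructor
  · rw [ae_map_iff (by fun_prop) hP, ae_restrict_iff' measurableSet_Icc]
    exact Eventually.of_forall h2
  · rw [Measure.ae_sum_iff]
    intro k
    rw [Measure.ae_ennreal_smul_measure_iff (by simp)]
    rw [ae_dirac_eq]
    exact h1 k

theorem aux_norm (z : ℕ → ℂ) (X : Lp ℂ 2 (paperMeasure z) →L[ℂ] Lp ℂ 2 (paperMeasure z))
    (hX : ‖X‖ ≤ 1) (p : Polynomial ℂ)
    (hp : ∀ f : Lp ℂ 2 (paperMeasure z), ⇑(X f) =ᵐ[paperMeasure z] fun w => p.eval w * f w)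
    (k : ℕ) : ‖p.eval (z k)‖ ≤ 1 := by
  have := aux_finite z
  let f : Lp ℂ 2 (paperMeasure z) :=
    indicatorConstLp 2 (measurableSet_singleton (z k)) (measure_ne_top _ _) (1 : ℂ)
  have hf : ⇑f =ᵐ[paperMeasure z] ({z k} : Set ℂ).indicator fun _ => 1 := indicatorConstLp_coeFn
  have hf0 : f ≠ 0 := by
    intro h0
    rw [h0] at hf
    have h1 := hf.symm.trans (Lp.coeFn_zero ℂ 2 (paperMeasure z))
    have := (aux_ae z h1).1 k
    simp at this
  have hXf : X f = p.eval (z k) • f := by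
    apply Lp.ext
    filter_upwards [hp f, hf, Lp.coeFn_smul (p.eval (z k)) f] with w h1 h2 h3
    rw [h1, h3, Pi.smul_apply, smul_eq_mul, h2]
    by_cases hw : w = z k
    · rw [hw]
    · simp [hw]
  have h1 := X.le_of_opNorm_le hX f
  rw [hXf, norm_smul] at h1
  exact le_of_mul_le_mul_right h1 (norm_pos_iff.2 hf0)

/-- If the points `z_k` of the open unit disc accumulate at every point of the unit circle
and stay away from `[0,1/2]`, then the algebra `𝓡 = {p(M_z)}` is not localizing
on the Hilbert space `L²(μ)`. -/
theorem polynomial_multiplication_not_localizing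
    (z : ℕ → ℂ) (hz : ∀ k, ‖z k‖ < 1)
    (hsphere : Metric.sphere (0 : ℂ) 1 ⊆ closure (Set.range z))
    (hdisj : closure (Set.range z) ∩ (Complex.ofReal '' Set.Icc 0 (1/2)) = ∅) :
    ¬ IsLocalizing {X : Lp ℂ 2 (paperMeasure z) →L[ℂ] Lp ℂ 2 (paperMeasure z) |
        ∃ p : Polynomial ℂ, ∀ f : Lp ℂ 2 (paperMeasure z),
          ⇑(X f) =ᵐ[paperMeasure z] fun w => p.eval w * f w} := by
  have := aux_finite z
  rintro ⟨c, r, hr, -, H⟩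
  have hu : ∀ n : ℕ, MemLp (fun w : ℂ => (Real.fourierChar ((n : ℝ) * w.re) : ℂ)) 2
      (paperMeasure z) := fun n => by
    refine MemLp.of_bound (Continuous.aestronglyMeasurable (by fun_prop)) 1 ?_
    exact Eventually.of_forall fun w => (aux_nc _).le
  let u : ℕ → Lp ℂ 2 (paperMeasure z) := fun n => (hu n).toLp
  have huc : ∀ n, ⇑(u n) =ᵐ[paperMeasure z] fun w => (Real.fourierChar ((n : ℝ) * w.re) : ℂ) :=
    fun n => (hu n).coeFn_toLp
  obtain ⟨M, hM0, hM⟩ : ∃ M : ℝ, 0 ≤ M ∧ ∀ n, ‖u n‖ ≤ M := by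
    refine ⟨_, ?_, fun n => Lp.norm_le_of_ae_bound zero_le_one ?_⟩
    · positivity
    · filter_upwards [huc n] with w hw
      rw [hw, aux_nc]
  let ε : ℝ := r / (M + 1)
  have hε : 0 < ε := by positivity
  let x : ℕ → Lp ℂ 2 (paperMeasure z) := fun n => c + (ε : ℂ) • u n
  have hx : ∀ n, x n ∈ Metric.closedBall c r := fun n => by
    rw [mem_closedBall_iff_norm, add_sub_cancel_left, norm_smul, Complex.norm_real,
      Real.norm_of_nonneg hε.le]
    calc ε * ‖u n‖ ≤ ε * (M + 1) := by gcongr; linarith [hM n]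
      _ = r := by simp only [ε]; field_simp
  obtain ⟨n, X, y, hn, hX, hX1, hy, hlim⟩ := H x hx
  choose p hp using hX
  have hpz : ∀ j k, ‖(p j).eval (z k)‖ ≤ 1 := fun j k => aux_norm z (X j) (hX1 j) (p j) (hp j) k
  have hps : ∀ j, ∀ w ∈ Metric.sphere (0 : ℂ) 1, ‖(p j).eval w‖ ≤ 1 := fun j w hw => by
    have hcl : IsClosed {w : ℂ | ‖(p j).eval w‖ ≤ 1} :=
      isClosed_le (p j).continuous.norm continuous_const
    have : closure (Set.range z) ⊆ {w : ℂ | ‖(p j).eval w‖ ≤ 1} := by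
      refine closure_minimal ?_ hcl
      rintro _ ⟨k, rfl⟩
      exact hpz j k
    exact this (hsphere hw)
  obtain ⟨ψ, hψ, hae⟩ := (tendstoInMeasure_of_tendsto_Lp hlim).exists_seq_tendsto_ae
  obtain ⟨φ, a, hφ, ha, hpa⟩ := aux_montel (fun j => p (ψ j)) (fun j => aux_coeff _ (hps _))
  have hdisc : ∀ᵐ w ∂paperMeasure z, ‖w‖ < 1 := by
    refine aux_ae' z hz (fun t ht => ?_) (measurableSet_lt (by fun_prop) (by fun_prop))
    rw [Complex.norm_real, Real.norm_of_nonneg ht.1]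
    linarith [ht.2]
  have hxc : ∀ᵐ w ∂paperMeasure z, ∀ j, (X j (x (n j)) : ℂ → ℂ) w =
      (p j).eval w * (c w + ε * (Real.fourierChar ((n j : ℝ) * w.re) : ℂ)) := by
    rw [ae_all_iff]
    intro j
    filter_upwards [hp j (x (n j)), Lp.coeFn_add c ((ε : ℂ) • u (n j)),
      Lp.coeFn_smul (ε : ℂ) (u (n j)), huc (n j)] with w h1 h2 h3 h4
    rw [h1]
    change _ * (c + (ε : ℂ) • u (n j) : Lp ℂ 2 (paperMeasure z)) w = _
    rw [h2, Pi.add_apply, h3, Pi.smul_apply, h4, smul_eq_mul]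
  have hmain : ∀ᵐ w ∂paperMeasure z, Tendsto (fun j => (p (ψ (φ j))).eval w *
      (c w + ε * (Real.fourierChar ((n (ψ (φ j)) : ℝ) * w.re) : ℂ))) atTop (𝓝 (y w)) := by
    filter_upwards [hae, hxc] with w h1 h2
    refine (h1.comp hφ.tendsto_atTop).congr fun j => ?_
    simp only [Function.comp]
    rw [h2]
  rcases aux_iso a ha with h0 | h0
  · apply hy
    apply Lp.ext
    filter_upwards [hmain, hdisc, Lp.coeFn_zero ℂ 2 (paperMeasure z)] with w h1 h2 h3
    rw [h3]
    have h4 := hpa w h2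
    simp only [h0, zero_mul, tsum_zero] at h4
    refine tendsto_nhds_unique h1 ?_
    refine h4.zero_mul_isBoundedUnder_le ?_
    refine isBoundedUnder_of ⟨‖c w‖ + ε, fun j => ?_⟩
    refine (norm_add_le _ _).trans ?_
    rw [norm_mul, aux_nc]
    simp [abs_of_pos hε]
  · obtain ⟨δ, hδ, hδ0⟩ := Metric.eventually_nhds_iff.1 (eventually_nhdsWithin_iff.1 h0)
    have hmn : StrictMono (fun j => n (ψ (φ j))) := hn.comp (hψ.comp hφ)
    refine aux_RL _ hmn (min δ (1/2)) (by positivity) ?_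
    filter_upwards [(aux_ae z (hmain.and hdisc)).2] with t ht hI
    have ht2 : t < δ := lt_of_lt_of_le hI.2 (min_le_left _ _)
    have ht3 : t < 1/2 := lt_of_lt_of_le hI.2 (min_le_right _ _)
    obtain ⟨h1, h2⟩ := ht ⟨hI.1.le, ht3.le⟩
    have hne := hδ0 (y := (t : ℂ)) (by simpa [abs_of_pos hI.1] using ht2)
      (by simpa using hI.1.ne')
    have h4 := hpa t h2
    have hεc : (ε : ℂ) ≠ 0 := by exact_mod_cast hε.ne'
    have h5 := ((h1.div h4 hne).sub_const (c t)).div_const (ε : ℂ)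
    refine ⟨_, h5.congr' ?_⟩
    filter_upwards [h4.eventually_ne hne] with j hj
    simp only [Pi.div_apply, Complex.ofReal_re]
    rw [mul_div_cancel_left₀ _ hj, add_sub_cancel_left, mul_div_cancel_left₀ _ hεc]
end

section
/- The algebra {M_φ : φ ∈ H∞(𝔻)} of all multiplication operators by bounded analytic functions on the unit disc, acting on the Bergman space A²(𝔻), is not localizing. -/
open Filter Topology MeasureTheory

/-- The two-dimensional Lebesgue (area) measure on the open unit disc. -/
noncomputable def bergmanMeasure : Measure ℂ := volume.restrict (Metric.ball 0 1)

/-- The Bergman space `A²(𝔻)`: the subspace of `L²(𝔻, dA)` consisting of (classes of)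
functions having a holomorphic representative on the open unit disc, with the `L²` norm. -/
noncomputable def BergmanSpace : Submodule ℂ (Lp ℂ 2 bergmanMeasure) where
  carrier := {f | ∃ g : ℂ → ℂ, DifferentiableOn ℂ g (Metric.ball 0 1) ∧
    ⇑f =ᵐ[bergmanMeasure] g}
  add_mem' := by
    rintro f f' ⟨g, hg, hfg⟩ ⟨g', hg', hfg'⟩
    refine ⟨g + g', hg.add hg', (Lp.coeFn_add f f').trans ?_⟩
    filter_upwards [hfg, hfg'] with x h1 h2
    simp [h1, h2]
  zero_mem' := ⟨0, differentiableOn_const 0, Lp.coeFn_zero ℂ 2 bergmanMeasure⟩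
  smul_mem' := by
    rintro c f ⟨g, hg, hfg⟩
    refine ⟨c • g, hg.const_smul c, (Lp.coeFn_smul c f).trans ?_⟩
    filter_upwards [hfg] with x h1
    simp [h1]


open scoped ENNReal Real

lemma bg_cauchy {φ : ℂ → ℂ} (hφ : DifferentiableOn ℂ φ (Metric.ball 0 1)) {w : ℂ}
    (hw : ‖w‖ < 1) {ρ : ℝ} (h1 : (1 + ‖w‖) / 2 ≤ ρ) (h2 : ρ < 1) :
    ‖φ w‖ₑ ^ 2 ≤ ENNReal.ofReal (2 / (1 - ‖w‖)) *
      ∫⁻ θ in Set.Ioo (-π) π, ‖φ (ρ * (Real.cos θ + Real.sin θ * Complex.I))‖ₑ ^ 2 := by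
  have hw0 := norm_nonneg w
  have hρ : 0 < ρ := by linarith
  have hφ2 : DifferentiableOn ℂ (fun z => φ z ^ 2) (Metric.ball 0 1) := hφ.pow 2
  have hd : DiffContOnCl ℂ (fun z => φ z ^ 2) (Metric.ball 0 |ρ|) := by
    apply DifferentiableOn.diffContOnCl
    apply hφ2.mono
    refine Metric.closure_ball_subset_closedBall.trans ?_
    rw [abs_of_pos hρ]
    exact Metric.closedBall_subset_ball h2
  have hc := hd.circleAverage_smul_div (w := w) (by simp [abs_of_pos hρ]; linarith)
  rw [Real.circleAverage_eq_integral_add (-π)] at hc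
  rw [intervalIntegral.integral_comp_add_right
    (fun θ ↦ ((circleMap 0 ρ θ - 0) / (circleMap 0 ρ θ - w)) • φ (circleMap 0 ρ θ) ^ 2)] at hc
  have e1 : (0:ℝ) + -π = -π := by ring
  have e2 : 2 * π + -π = π := by ring
  rw [e1, e2, intervalIntegral.integral_of_le (by linarith [Real.pi_pos]),
    integral_Ioc_eq_integral_Ioo] at hc
  rw [← enorm_pow, ← hc, enorm_smul]
  calc _ ≤ 1 * ‖∫ (t : ℝ) in Set.Ioo (-π) π,
          ((circleMap 0 ρ t - 0) / (circleMap 0 ρ t - w)) • φ (circleMap 0 ρ t) ^ 2‖ₑ := by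
        gcongr
        rw [Real.enorm_eq_ofReal (by positivity)]
        rw [ENNReal.ofReal_le_one]
        apply inv_le_one_of_one_le₀
        linarith [Real.pi_gt_three]
    _ ≤ ∫⁻ (t : ℝ) in Set.Ioo (-π) π, ‖((circleMap 0 ρ t - 0) / (circleMap 0 ρ t - w)) • φ (circleMap 0 ρ t) ^ 2‖ₑ := by
        rw [one_mul]; exact enorm_integral_le_lintegral_enorm _
    _ ≤ ∫⁻ (t : ℝ) in Set.Ioo (-π) π, ENNReal.ofReal (2 / (1 - ‖w‖)) *
          ‖φ (ρ * (Real.cos t + Real.sin t * Complex.I))‖ₑ ^ 2 := by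
        apply lintegral_mono
        intro t
        have e3 : (ρ * (Real.cos t + Real.sin t * Complex.I) : ℂ) = circleMap 0 ρ t := by
          simp [circleMap, Complex.exp_mul_I]
        simp only
        rw [e3, enorm_smul, enorm_pow]
        gcongr
        rw [← ofReal_norm]
        apply ENNReal.ofReal_le_ofReal
        rw [norm_div, sub_zero, norm_circleMap_zero, abs_of_pos hρ]
        have h3 : ρ - ‖w‖ ≤ ‖circleMap 0 ρ t - w‖ := by
          have := norm_sub_norm_le (circleMap 0 ρ t) w
          rwa [norm_circleMap_zero, abs_of_pos hρ] at this
        rw [div_le_div_iff₀ (by linarith) (by linarith)]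
        nlinarith
    _ = _ := lintegral_const_mul' _ _ ENNReal.ofReal_ne_top

/-- annulus -/
def bgAnn (ρ : ℝ) : Set ℂ := {z | ρ < ‖z‖ ∧ ‖z‖ < 1}

lemma bgAnn_meas (ρ : ℝ) : MeasurableSet (bgAnn ρ) := by
  apply IsOpen.measurableSet
  exact (isOpen_lt continuous_const continuous_norm).inter (isOpen_lt continuous_norm continuous_const)

lemma bg_sub {φ : ℂ → ℂ} (hφ : DifferentiableOn ℂ φ (Metric.ball 0 1)) {w : ℂ}
    (hw : ‖w‖ < 1) {ρ : ℝ} (h1 : (1 + ‖w‖) / 2 ≤ ρ) :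
    ENNReal.ofReal (1 - ρ) * (ENNReal.ofReal (1/2) * ‖φ w‖ₑ ^ 2) ≤ ENNReal.ofReal (2 / (1 - ‖w‖)) *
      ∫⁻ z in bgAnn ρ, ‖φ z‖ₑ ^ 2 := by
  have hw0 := norm_nonneg w
  have hρ : 0 < ρ := by linarith
  set K := ENNReal.ofReal (2 / (1 - ‖w‖)) with hK
  set F : ℂ → ℝ≥0∞ := (bgAnn ρ).indicator (fun z => ‖φ z‖ₑ ^ 2) with hF
  have hFm : Measurable F := by
    have hc : ContinuousOn (fun z => ‖φ z‖ₑ ^ 2) (bgAnn ρ) := by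
      have : ContinuousOn φ (bgAnn ρ) := hφ.continuousOn.mono (fun z hz => by
        simpa using hz.2)
      exact (ENNReal.continuous_pow 2).comp_continuousOn (continuous_enorm.comp_continuousOn this)
    classical
    have := hc.measurable_piecewise (g := fun _ => 0) continuousOn_const (bgAnn_meas ρ)
    rw [hF, ← Set.piecewise_eq_indicator]
    exact this
  rw [← lintegral_indicator (bgAnn_meas ρ), ← Complex.lintegral_comp_polarCoord_symm]
  rw [polarCoord_target, Measure.volume_eq_prod, ← Measure.prod_restrict, lintegral_prod]
  swap
  · apply Measurable.aemeasurable
    have : Measurable (fun p : ℝ × ℝ => Complex.polarCoord.symm p) := by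
      simp only [Complex.polarCoord_symm_apply]
      fun_prop
    simp only [smul_eq_mul]
    exact (ENNReal.measurable_ofReal.comp measurable_fst).mul (hFm.comp this)
  rw [← lintegral_const_mul' _ _ ENNReal.ofReal_ne_top]
  calc _ = ∫⁻ r in Set.Ioo ρ 1, (ENNReal.ofReal (1/2) * ‖φ w‖ₑ ^ 2) := by
        rw [setLIntegral_const, Real.volume_Ioo, mul_comm]
    _ ≤ ∫⁻ r in Set.Ioo ρ 1, K * ∫⁻ (y : ℝ) in Set.Ioo (-π) π, ENNReal.ofReal (r, y).1 •
        F (Complex.polarCoord.symm (r, y)) := by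
        apply setLIntegral_mono' measurableSet_Ioo
        intro r hr
        have := bg_cauchy hφ hw (h1.trans hr.1.le) hr.2
        simp only [smul_eq_mul]
        rw [lintegral_const_mul' _ _ ENNReal.ofReal_ne_top, mul_left_comm]
        refine mul_le_mul' (ENNReal.ofReal_le_ofReal (by linarith [hr.1])) (this.trans (mul_le_mul_right ?_ _))
        apply lintegral_mono
        intro t
        have hm : (Complex.polarCoord.symm (r, t)) ∈ bgAnn ρ := by
          have : ‖Complex.polarCoord.symm (r, t)‖ = r := by
            rw [Complex.norm_polarCoord_symm, abs_of_pos (hρ.trans hr.1)]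
          exact ⟨by rw [this]; exact hr.1, by rw [this]; exact hr.2⟩
        simp only [hF]
        rw [Set.indicator_of_mem hm, Complex.polarCoord_symm_apply]
    _ ≤ _ := lintegral_mono_set (fun r hr => hρ.trans hr.1)

lemma bg_norm_pow (N : ℕ) : ∫⁻ z in Metric.ball (0:ℂ) 1, ‖z ^ N‖ₑ ^ 2 ≤ ENNReal.ofReal (π / (N + 1)) := by
  rw [← lintegral_indicator measurableSet_ball, ← Complex.lintegral_comp_polarCoord_symm]
  rw [polarCoord_target, Measure.volume_eq_prod, ← Measure.prod_restrict]
  refine (lintegral_prod_le _).trans ?_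
  calc _ ≤ ∫⁻ r in Set.Ioi (0:ℝ), ∫⁻ (y : ℝ) in Set.Ioo (-π) π,
          (Set.Ioo (0:ℝ) 1).indicator (fun r => ENNReal.ofReal (r ^ (2 * N + 1))) r := by
        apply setLIntegral_mono' measurableSet_Ioi
        intro r hr
        have hr0 : 0 < r := hr
        apply lintegral_mono
        intro t
        have hn : ‖Complex.polarCoord.symm (r, t)‖ = r := by
          rw [Complex.norm_polarCoord_symm, abs_of_pos hr0]
        simp only [smul_eq_mul]
        by_cases h : r < 1
        · rw [Set.indicator_of_mem (mem_ball_zero_iff.2 (hn.trans_lt h)),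
            Set.indicator_of_mem (show r ∈ Set.Ioo (0:ℝ) 1 from ⟨hr0, h⟩),
            ← ofReal_norm, norm_pow, hn, ← ENNReal.ofReal_pow (by positivity),
            ← ENNReal.ofReal_mul hr0.le]
          apply ENNReal.ofReal_le_ofReal
          apply le_of_eq; ring
        · rw [Set.indicator_of_notMem (fun h' => h (hn ▸ mem_ball_zero_iff.1 h'))]
          simp
    _ ≤ ∫⁻ r, ENNReal.ofReal (2 * π) * (Set.Ioo (0:ℝ) 1).indicator (fun r => ENNReal.ofReal (r ^ (2 * N + 1))) r := by
        refine (setLIntegral_le_lintegral _ _).trans (lintegral_mono fun r => ?_)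
        rw [setLIntegral_const, Real.volume_Ioo, mul_comm]
        apply le_of_eq; congr 2; ring
    _ = ENNReal.ofReal (2 * π) * ∫⁻ r in Set.Ioo (0:ℝ) 1, ENNReal.ofReal (r ^ (2 * N + 1)) := by
        rw [lintegral_const_mul' _ _ ENNReal.ofReal_ne_top, lintegral_indicator measurableSet_Ioo]
    _ = ENNReal.ofReal (2 * π) * ENNReal.ofReal (1 / (2 * N + 2)) := by
        congr 1
        rw [← ofReal_integral_eq_lintegral_ofReal]
        · congr 1
          rw [← integral_Ioc_eq_integral_Ioo, ← intervalIntegral.integral_of_le zero_le_one, integral_pow]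
          simp; ring
        · exact (Continuous.integrableOn_Icc (by fun_prop)).mono_set Set.Ioo_subset_Icc_self
        · filter_upwards [ae_restrict_mem measurableSet_Ioo] with r hr
          have := hr.1
          positivity
    _ ≤ _ := by
        rw [← ENNReal.ofReal_mul (by positivity)]
        apply ENNReal.ofReal_le_ofReal
        apply le_of_eq; field_simp

instance bg_finite : IsFiniteMeasure bergmanMeasure := by
  unfold bergmanMeasure
  exact ⟨by simp⟩

lemma bg_sq {α : Type*} [MeasurableSpace α] (μ : Measure α) (f : α → ℂ) :
    eLpNorm f 2 μ ^ 2 = ∫⁻ z, ‖f z‖ₑ ^ 2 ∂μ := by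
  have := eLpNorm_nnreal_pow_eq_lintegral (f := f) (μ := μ) (p := 2) (by norm_num)
  simpa using this

lemma bg_exists_G (r : ℝ) (hr : 0 < r) (N : ℕ) : ∃ G : BergmanSpace,
    ⇑(G : Lp ℂ 2 bergmanMeasure) =ᵐ[bergmanMeasure]
      (fun z => ((r / 2 * √(N + 1) : ℝ) : ℂ) * z ^ N) ∧ ‖G‖ ≤ r := by
  set a : ℝ := r / 2 * √(N + 1) with ha
  have ha0 : 0 ≤ a := by positivity
  set f : ℂ → ℂ := fun z => (a : ℂ) * z ^ N with hf
  have h1 : eLpNorm f 2 bergmanMeasure ^ 2 ≤ ENNReal.ofReal r ^ 2 := by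
    rw [bg_sq]
    simp only [hf, enorm_mul, mul_pow]
    rw [lintegral_const_mul' _ _ (by simp)]
    refine (mul_le_mul_right (bg_norm_pow N) _).trans ?_
    rw [← ofReal_norm, ← ENNReal.ofReal_pow (by positivity), ← ENNReal.ofReal_mul (by positivity),
      ← ENNReal.ofReal_pow hr.le]
    apply ENNReal.ofReal_le_ofReal
    rw [Complex.norm_real, Real.norm_of_nonneg ha0, ha, mul_pow, Real.sq_sqrt (by positivity)]
    field_simp
    linarith [Real.pi_lt_four]
  have h2 : eLpNorm f 2 bergmanMeasure ≤ ENNReal.ofReal r := by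
    by_contra h
    exact absurd h1 (not_le.2 (ENNReal.pow_lt_pow_left (by norm_num) (not_le.1 h)))
  have hm : MemLp f 2 bergmanMeasure :=
    ⟨by apply Continuous.aestronglyMeasurable; fun_prop, h2.trans_lt ENNReal.ofReal_lt_top⟩
  refine ⟨⟨hm.toLp f, f, by fun_prop, hm.coeFn_toLp⟩, hm.coeFn_toLp, ?_⟩
  change ‖hm.toLp f‖ ≤ r
  rw [Lp.norm_toLp]
  exact ENNReal.toReal_le_of_le_ofReal hr.le h2

lemma bg_le_one {φ : ℂ → ℂ} (hφ : DifferentiableOn ℂ φ (Metric.ball 0 1))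
    (X : BergmanSpace →L[ℂ] BergmanSpace) (hX : ‖X‖ ≤ 1)
    (hXφ : ∀ f : BergmanSpace, ⇑(X f : Lp ℂ 2 bergmanMeasure) =ᵐ[bergmanMeasure]
            fun w => φ w * (f : Lp ℂ 2 bergmanMeasure) w) :
    ∀ᵐ z ∂bergmanMeasure, ‖φ z‖ ≤ 1 := by
  have hm : MemLp (fun _ : ℂ => (1:ℂ)) 2 bergmanMeasure := memLp_const 1
  set one : BergmanSpace := ⟨hm.toLp _, fun _ => 1, by fun_prop, hm.coeFn_toLp⟩ with hone
  set Y : ℕ → BergmanSpace := fun k => Nat.rec one (fun _ f => X f) k with hY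
  have hY1 : ∀ k, ⇑(Y k : Lp ℂ 2 bergmanMeasure) =ᵐ[bergmanMeasure] fun w => φ w ^ k := by
    intro k
    induction k with
    | zero => 
      have : ⇑(Y 0 : Lp ℂ 2 bergmanMeasure) =ᵐ[bergmanMeasure] fun _ => 1 := hm.coeFn_toLp
      filter_upwards [this] with w hw
      simp [hw]
    | succ k ih =>
      have : ⇑(Y (k+1) : Lp ℂ 2 bergmanMeasure) =ᵐ[bergmanMeasure] _ := hXφ (Y k)
      filter_upwards [this, ih] with w h1 h2
      rw [h1, h2, pow_succ']
  have hY2 : ∀ k, ‖Y k‖ ≤ ‖one‖ := by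
    intro k
    induction k with
    | zero => exact le_rfl
    | succ k ih => 
      refine (X.le_opNorm (Y k)).trans (le_trans ?_ ih)
      exact mul_le_of_le_one_left (norm_nonneg _) hX
  have key : ∀ c : ℝ, 1 < c → bergmanMeasure {z | c ≤ ‖φ z‖} = 0 := by
    intro c hc
    set S := {z | c ≤ ‖φ z‖} with hS
    have hb : ∀ k, c ^ k * bergmanMeasure.real S ≤ ‖one‖ ^ 2 + bergmanMeasure.real Set.univ := by
      intro k
      have h1 := mul_meas_ge_le_pow_eLpNorm' bergmanMeasure (p := 2) (by norm_num) (by norm_num)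
        (Lp.aestronglyMeasurable (Y k : Lp ℂ 2 bergmanMeasure)) (ENNReal.ofReal (c ^ k))
      have h2 : bergmanMeasure S ≤ bergmanMeasure {x | ENNReal.ofReal (c ^ k) ≤ ‖(Y k : Lp ℂ 2 bergmanMeasure) x‖ₑ} := by
        apply measure_mono_ae
        filter_upwards [hY1 k] with z hz
        intro (h : c ≤ ‖φ z‖)
        change ENNReal.ofReal (c ^ k) ≤ _
        rw [hz, ← ofReal_norm, norm_pow]
        gcongr
      have h3 : eLpNorm (Y k : Lp ℂ 2 bergmanMeasure) 2 bergmanMeasure ≤ ENNReal.ofReal ‖one‖ := by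
        rw [← ENNReal.ofReal_toReal (Lp.eLpNorm_ne_top (Y k : Lp ℂ 2 bergmanMeasure)), ← Lp.norm_def]
        exact ENNReal.ofReal_le_ofReal (hY2 k)
      have h4 : ENNReal.ofReal (c ^ k) ^ 2 * bergmanMeasure S ≤ ENNReal.ofReal ‖one‖ ^ 2 := by
        have h1' : ENNReal.ofReal (c ^ k) ^ 2 *
            bergmanMeasure {x | ENNReal.ofReal (c ^ k) ≤ ‖(Y k : Lp ℂ 2 bergmanMeasure) x‖ₑ} ≤
              eLpNorm (Y k : Lp ℂ 2 bergmanMeasure) 2 bergmanMeasure ^ 2 := by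
          simpa using h1
        refine (mul_le_mul_right h2 _).trans (h1'.trans ?_)
        gcongr
      have h5 := ENNReal.toReal_mono (by simp) h4
      rw [ENNReal.toReal_mul, ENNReal.toReal_pow, ENNReal.toReal_pow, ENNReal.toReal_ofReal (by positivity),
        ENNReal.toReal_ofReal (by positivity)] at h5
      change (c ^ k) ^ 2 * bergmanMeasure.real S ≤ _ at h5
      have h6 : 1 ≤ c ^ k := one_le_pow₀ hc.le
      have h7 : (c ^ k) ≤ (c ^ k) ^ 2 := by nlinarith
      have h8 : 0 ≤ bergmanMeasure.real S := measureReal_nonneg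
      have h9 : 0 ≤ bergmanMeasure.real Set.univ := measureReal_nonneg
      nlinarith
    by_contra hne
    have hpos : 0 < bergmanMeasure.real S := ENNReal.toReal_pos hne (measure_ne_top _ _)
    obtain ⟨k, hk⟩ := pow_unbounded_of_one_lt ((‖one‖ ^ 2 + bergmanMeasure.real Set.univ) / bergmanMeasure.real S) hc
    rw [div_lt_iff₀ hpos] at hk
    exact absurd (hb k) (not_le.2 hk)
  have h2 : ∀ᵐ z ∂bergmanMeasure, ∀ m : ℕ, ‖φ z‖ < 1 + 1 / ((m : ℝ) + 1) := by
    rw [ae_all_iff]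
    intro m
    rw [ae_iff]
    simp only [not_lt]
    apply key
    have : 0 < 1 / ((m : ℝ) + 1) := by positivity
    linarith
  filter_upwards [h2] with z hz
  apply le_of_forall_pos_le_add
  intro ε hε
  obtain ⟨m, hm⟩ := exists_nat_one_div_lt hε
  linarith [hz m]

/-- the annuli used -/
def bgA (N : ℕ) : Set ℂ := bgAnn (1 - 1 / (4 * ((N : ℝ) + 1)))

lemma bgA_meas (N : ℕ) : MeasurableSet (bgA N) := bgAnn_meas _

lemma bgA_tendsto : Tendsto (fun N => bergmanMeasure (bgA N)) atTop (𝓝 0) := by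
  have hanti : Antitone bgA := by
    intro m n hmn z hz
    refine ⟨lt_of_le_of_lt ?_ hz.1, hz.2⟩
    gcongr
  have := tendsto_measure_iInter_atTop (μ := bergmanMeasure) (s := bgA)
    (fun i => (bgAnn_meas _).nullMeasurableSet) hanti ⟨0, measure_ne_top _ _⟩
  have he : ⋂ n, bgA n = ∅ := by
    ext z
    simp only [Set.mem_iInter, Set.mem_empty_iff_false, iff_false, not_forall]
    by_cases h : ‖z‖ < 1
    · obtain ⟨m, hm⟩ := exists_nat_one_div_lt (sub_pos.2 h)
      refine ⟨m, fun hz => ?_⟩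
      have h1 := hz.1
      have : 1 / (4 * ((m : ℝ) + 1)) ≤ 1 / ((m : ℝ) + 1) := by
        apply one_div_le_one_div_of_le (by positivity)
        have : (0:ℝ) ≤ m := by positivity
        linarith
      linarith
    · exact ⟨0, fun hz => h hz.2⟩
  rwa [he, measure_empty] at this

lemma bg_ind_tendsto (f : Lp ℂ 2 bergmanMeasure) :
    Tendsto (fun N => eLpNorm ((bgA N).indicator f) 2 bergmanMeasure) atTop (𝓝 0) := by
  rw [ENNReal.tendsto_nhds_zero]
  intro ε hε
  by_cases ht : ε = ⊤
  · simp [ht]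
  have hε' : 0 < ε.toReal := ENNReal.toReal_pos hε.ne' ht
  obtain ⟨δ, hδ, h⟩ := (Lp.memLp f).eLpNorm_indicator_le (by norm_num) (by norm_num) hε'
  have := (ENNReal.tendsto_nhds_zero.1 bgA_tendsto) (ENNReal.ofReal δ) (by simpa using hδ)
  filter_upwards [this] with N hN
  exact (h _ (bgAnn_meas _) hN).trans (by rw [ENNReal.ofReal_toReal ht])

/-- Lower bound for the mass on the annulus. -/
lemma bg_lower {φ : ℂ → ℂ} (hφ : DifferentiableOn ℂ φ (Metric.ball 0 1)) {w : ℂ}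
    (hw : ‖w‖ < 1) {r : ℝ} (hr : 0 < r) (N : ℕ) (h1 : (1 + ‖w‖) / 2 ≤ 1 - 1 / (4 * ((N : ℝ) + 1))) :
    ENNReal.ofReal (r ^ 2 / 64) * ‖φ w‖ₑ ^ 2 ≤ ENNReal.ofReal (2 / (1 - ‖w‖)) *
      eLpNorm ((bgA N).indicator (fun z => φ z * (((r / 2 * √(N + 1) : ℝ) : ℂ) * z ^ N))) 2
        bergmanMeasure ^ 2 := by
  have hs := bg_sub hφ hw h1
  rw [eLpNorm_indicator_eq_eLpNorm_restrict (bgA_meas _), bg_sq]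
  have hsub : bgA N ⊆ Metric.ball 0 1 := fun z hz => mem_ball_zero_iff.2 hz.2
  have hrs : bergmanMeasure.restrict (bgA N) = volume.restrict (bgA N) := by
    unfold bergmanMeasure
    rw [Measure.restrict_restrict (bgA_meas _), Set.inter_eq_left.2 hsub]
  rw [hrs]
  have h2 : ENNReal.ofReal (r ^ 2 * (N + 1) / 8) * ∫⁻ z in bgA N, ‖φ z‖ₑ ^ 2 ≤
      ∫⁻ z in bgA N, ‖φ z * (((r / 2 * √(N + 1) : ℝ) : ℂ) * z ^ N)‖ₑ ^ 2 := by
    rw [← lintegral_const_mul' _ _ ENNReal.ofReal_ne_top]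
    apply setLIntegral_mono' (bgA_meas _)
    intro z hz
    rw [enorm_mul, mul_pow, mul_comm]
    gcongr
    rw [← ofReal_norm, ← ENNReal.ofReal_pow (by positivity)]
    apply ENNReal.ofReal_le_ofReal
    rw [norm_mul, Complex.norm_real, Real.norm_of_nonneg (by positivity), norm_pow, mul_pow, mul_pow,
      Real.sq_sqrt (by positivity)]
    have hb : (1:ℝ) / 2 ≤ (‖z‖ ^ N) ^ 2 := by
      have hb1 := one_add_mul_le_pow (a := - (1 / (4 * ((N : ℝ) + 1)))) (by
        have : 1 / (4 * ((N : ℝ) + 1)) ≤ 1 := by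
          rw [div_le_one (by positivity)]
          have : (0:ℝ) ≤ N := by positivity
          linarith
        linarith) (N * 2)
      have hb2 : (1 + - (1 / (4 * ((N : ℝ) + 1)))) ^ (N * 2) ≤ ‖z‖ ^ (N * 2) := by
        apply pow_le_pow_left₀
        · linarith [norm_nonneg w]
        · linarith [hz.1]
      rw [← pow_mul]
      refine le_trans ?_ (hb1.trans hb2)
      push_cast
      have : (N : ℝ) * 2 * (1 / (4 * ((N : ℝ) + 1))) ≤ 1 / 2 := by
        rw [mul_one_div, div_le_div_iff₀ (by positivity) (by norm_num)]
        linarith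
      linarith
    calc r ^ 2 * (N + 1) / 8 = (r / 2) ^ 2 * (N + 1) * (1 / 2) := by ring
      _ ≤ _ := by gcongr
  refine le_trans ?_ (mul_le_mul_right h2 _)
  rw [mul_left_comm]
  refine le_trans ?_ (mul_le_mul_right hs _)
  rw [← mul_assoc, ← mul_assoc, ← ENNReal.ofReal_mul (by positivity), ← ENNReal.ofReal_mul (by
    have : 0 ≤ 1 - (1 - 1 / (4 * ((N : ℝ) + 1))) := by
      have : 0 ≤ 1 / (4 * ((N : ℝ) + 1)) := by positivity
      linarith
    positivity)]
  gcongr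
  apply le_of_eq
  field_simp
  ring

/-- The algebra of multiplication operators by bounded analytic functions on the unit
disc is not localizing on the Bergman space `A²(𝔻)`. -/
theorem bergman_Hinfty_not_localizing :
    ¬ IsLocalizing {X : BergmanSpace →L[ℂ] BergmanSpace |
        ∃ φ : ℂ → ℂ, DifferentiableOn ℂ φ (Metric.ball 0 1) ∧
          (∃ C : ℝ, ∀ w ∈ Metric.ball (0 : ℂ) 1, ‖φ w‖ ≤ C) ∧
          ∀ f : BergmanSpace, ⇑(X f : Lp ℂ 2 bergmanMeasure) =ᵐ[bergmanMeasure]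
            fun w => φ w * (f : Lp ℂ 2 bergmanMeasure) w} := by
  rintro ⟨c, r, hr, -, H⟩
  choose G hG hGn using fun N => bg_exists_G r hr N
  obtain ⟨n, X, y, hn, hX, hXn, hy, hlim⟩ := H (fun N => c + G N) (fun N => by simpa using hGn N)
  apply hy
  choose φ hφ _ hXφ using hX
  have hnt : Tendsto n atTop atTop := hn.tendsto_atTop
  have hlim' : Tendsto (fun j => ((X j (c + G (n j)) : BergmanSpace) : Lp ℂ 2 bergmanMeasure))
      atTop (𝓝 (y : Lp ℂ 2 bergmanMeasure)) := (continuous_subtype_val.tendsto y).comp hlim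
  have hT := (Lp.tendsto_Lp_iff_tendsto_eLpNorm' _ _).mp hlim'
  have hrep : ∀ j, ⇑((X j (c + G (n j)) : BergmanSpace) : Lp ℂ 2 bergmanMeasure)
      =ᵐ[bergmanMeasure] fun z => φ j z * ((c : Lp ℂ 2 bergmanMeasure) z +
        ((r / 2 * √((n j : ℕ) + 1) : ℝ) : ℂ) * z ^ (n j)) := by
    intro j
    filter_upwards [hXφ j (c + G (n j)), hG (n j), Lp.coeFn_add (c : Lp ℂ 2 bergmanMeasure)
      (G (n j) : Lp ℂ 2 bergmanMeasure)] with z h1 h2 h3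
    rw [h1, Submodule.coe_add, h3, Pi.add_apply, h2]
  -- the mass of `φ g` on the annuli tends to zero
  have hE : Tendsto (fun j => eLpNorm ((bgA (n j)).indicator
      (fun z => φ j z * (((r / 2 * √((n j : ℕ) + 1) : ℝ) : ℂ) * z ^ (n j)))) 2 bergmanMeasure)
      atTop (𝓝 0) := by
    have hU := (bg_ind_tendsto (y : Lp ℂ 2 bergmanMeasure)).comp hnt
    have hV := (bg_ind_tendsto (c : Lp ℂ 2 bergmanMeasure)).comp hnt
    have hsum := (hT.add hU).add hV
    simp only [add_zero] at hsum
    refine tendsto_of_tendsto_of_tendsto_of_le_of_le tendsto_const_nhds hsum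
      (fun _ => zero_le) ?_
    intro j
    have hφm : AEStronglyMeasurable (φ j) bergmanMeasure :=
      (hφ j).continuousOn.aestronglyMeasurable measurableSet_ball
    have hφ1 := bg_le_one (hφ j) (X j) (hXn j) (hXφ j)
    set Y : Lp ℂ 2 bergmanMeasure := ((X j (c + G (n j)) : BergmanSpace) : Lp ℂ 2 bergmanMeasure)
    set A := bgA (n j)
    have hA : MeasurableSet A := bgA_meas _
    have heq : (A.indicator
        (fun z => φ j z * (((r / 2 * √((n j : ℕ) + 1) : ℝ) : ℂ) * z ^ (n j))))
        =ᵐ[bergmanMeasure] (A.indicator (⇑Y - ⇑(y : Lp ℂ 2 bergmanMeasure)) +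
          A.indicator (⇑(y : Lp ℂ 2 bergmanMeasure))) -
          A.indicator (fun z => φ j z * (c : Lp ℂ 2 bergmanMeasure) z) := by
      filter_upwards [hrep j] with z hz
      by_cases h : z ∈ A
      · simp only [Pi.sub_apply, Pi.add_apply, Set.indicator_of_mem h]
        rw [hz]; ring
      · simp [Set.indicator_of_notMem h]
    have m1 : AEStronglyMeasurable (⇑Y) bergmanMeasure := Lp.aestronglyMeasurable _
    have m2 : AEStronglyMeasurable (⇑(y : Lp ℂ 2 bergmanMeasure)) bergmanMeasure :=
      Lp.aestronglyMeasurable _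
    have m3 : AEStronglyMeasurable (⇑(c : Lp ℂ 2 bergmanMeasure)) bergmanMeasure :=
      Lp.aestronglyMeasurable _
    simp only
    rw [eLpNorm_congr_ae heq]
    refine (eLpNorm_sub_le (((m1.sub m2).indicator hA).add (m2.indicator hA))
      ((hφm.mul m3).indicator hA) (by norm_num)).trans ?_
    refine add_le_add ((eLpNorm_add_le ((m1.sub m2).indicator hA) (m2.indicator hA)
      (by norm_num)).trans (add_le_add (eLpNorm_indicator_le _) le_rfl)) ?_
    apply eLpNorm_mono_ae
    filter_upwards [hφ1] with z hz
    by_cases h : z ∈ A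
    · rw [Set.indicator_of_mem h, Set.indicator_of_mem h, Pi.mul_apply, norm_mul]
      exact mul_le_of_le_one_left (norm_nonneg _) hz
    · rw [Set.indicator_of_notMem h, Set.indicator_of_notMem h]
  -- hence `φ j` tends to zero pointwise
  have hφ0 : ∀ w : ℂ, ‖w‖ < 1 → Tendsto (fun j => φ j w) atTop (𝓝 0) := by
    intro w hw
    have hE2 : Tendsto (fun j => ENNReal.ofReal (2 / (1 - ‖w‖)) * eLpNorm ((bgA (n j)).indicator
      (fun z => φ j z * (((r / 2 * √((n j : ℕ) + 1) : ℝ) : ℂ) * z ^ (n j)))) 2 bergmanMeasure ^ 2)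
      atTop (𝓝 0) := by
      have := ENNReal.Tendsto.const_mul (a := ENNReal.ofReal (2 / (1 - ‖w‖)))
        (((ENNReal.continuous_pow 2).tendsto 0).comp hE) (Or.inr ENNReal.ofReal_ne_top)
      simpa using this
    have hN : ∀ᶠ j in atTop, (1 + ‖w‖) / 2 ≤ 1 - 1 / (4 * ((n j : ℝ) + 1)) := by
      have hN0 : 0 < (1 - ‖w‖) / 2 := by linarith
      obtain ⟨m, hm⟩ := exists_nat_one_div_lt hN0
      filter_upwards [hnt.eventually_ge_atTop m] with j hj
      have : 1 / (4 * ((n j : ℝ) + 1)) ≤ 1 / ((m : ℝ) + 1) := by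
        apply one_div_le_one_div_of_le (by positivity)
        have h1 : (m : ℝ) ≤ n j := by exact_mod_cast hj
        have h2 : (0:ℝ) ≤ m := by positivity
        linarith
      linarith
    have h3 : Tendsto (fun j => ENNReal.ofReal (r ^ 2 / 64) * ‖φ j w‖ₑ ^ 2) atTop (𝓝 0) := by
      refine tendsto_of_tendsto_of_tendsto_of_le_of_le' tendsto_const_nhds hE2
        (Eventually.of_forall fun _ => zero_le) ?_
      filter_upwards [hN] with j hj
      exact bg_lower (hφ j) hw hr (n j) hj
    have h4 := (ENNReal.tendsto_toReal ENNReal.zero_ne_top).comp h3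
    have h5 : Tendsto (fun j => r ^ 2 / 64 * ‖φ j w‖ ^ 2) atTop (𝓝 0) := by
      refine h4.congr (fun j => ?_)
      simp [ENNReal.toReal_mul, ENNReal.toReal_ofReal (show 0 ≤ r ^ 2 / 64 by positivity)]
    have h6 : Tendsto (fun j => ‖φ j w‖ ^ 2) atTop (𝓝 0) := by
      have := h5.const_mul (r ^ 2 / 64)⁻¹
      rw [mul_zero] at this
      refine this.congr (fun j => ?_)
      rw [inv_mul_cancel_left₀ (by positivity)]
    have h7 := h6.sqrt
    simp only [Real.sqrt_zero, Real.sqrt_sq (norm_nonneg _)] at h7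
    exact tendsto_zero_iff_norm_tendsto_zero.2 h7
  -- conclude
  obtain ⟨ns, hns, hae⟩ := (tendstoInMeasure_of_tendsto_Lp hlim').exists_seq_tendsto_ae
  have hball : ∀ᵐ z ∂bergmanMeasure, z ∈ Metric.ball (0:ℂ) 1 := ae_restrict_mem measurableSet_ball
  have hfin : ⇑(y : Lp ℂ 2 bergmanMeasure) =ᵐ[bergmanMeasure] 0 := by
    filter_upwards [hae, hball, ae_all_iff.2 hrep] with z h1 h2 h3
    have hz : ‖z‖ < 1 := mem_ball_zero_iff.1 h2
    refine tendsto_nhds_unique h1 ?_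
    have hg : Tendsto (fun N : ℕ => ((r / 2 * √((N : ℕ) + 1) : ℝ) : ℂ) * z ^ N) atTop (𝓝 0) := by
      have hp := tendsto_self_mul_const_pow_of_lt_one (norm_nonneg z) hz
      have hq := tendsto_pow_atTop_nhds_zero_of_lt_one (norm_nonneg z) hz
      have hpq := (hp.add hq).const_mul (r / 2)
      rw [add_zero, mul_zero] at hpq
      refine squeeze_zero_norm (fun N => ?_) hpq
      rw [norm_mul, Complex.norm_real, Real.norm_of_nonneg (by positivity), norm_pow, mul_assoc]
      have : √((N : ℝ) + 1) ≤ N + 1 := by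
        rw [Real.sqrt_le_left (by positivity)]
        have : (0:ℝ) ≤ N := by positivity
        nlinarith
      calc r / 2 * (√((N : ℝ) + 1) * ‖z‖ ^ N) ≤ r / 2 * ((N + 1) * ‖z‖ ^ N) := by gcongr
        _ = _ := by ring
    have hprod : Tendsto (fun j => φ j z * ((c : Lp ℂ 2 bergmanMeasure) z +
        ((r / 2 * √((n j : ℕ) + 1) : ℝ) : ℂ) * z ^ (n j))) atTop (𝓝 0) := by
      have := (hφ0 z hz).mul ((hg.comp hnt).const_add ((c : Lp ℂ 2 bergmanMeasure) z))
      rw [zero_mul] at this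
      exact this
    refine (hprod.comp hns.tendsto_atTop).congr (fun i => ?_)
    exact (h3 (ns i)).symm
  apply Subtype.ext
  exact (Lp.eq_zero_iff_ae_eq_zero).2 hfin
end

section
/- The algebra {M_φ : φ ∈ H∞(𝔻)} of all multiplication operators by bounded analytic functions on the unit disc, acting on the Hardy space H²(𝔻), is not localizing. -/
open Filter Topology

/-- The Hardy space `H²(𝔻)`, realized as the space of square-summable coefficient
sequences `(a_n)` of holomorphic functions `z ↦ ∑ a_n zⁿ` on the unit disc. -/
noncomputable abbrev HardySpace := lp (fun _ : ℕ => ℂ) 2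

/-- The holomorphic function on the unit disc attached to an element of `H²(𝔻)`. -/
noncomputable def HardySpace.toFun (a : HardySpace) : ℂ → ℂ :=
  fun z => ∑' n : ℕ, a n * z ^ n


namespace HardyAux

/-- shift of a sequence -/
def sf (f : ℕ → ℂ) : ℕ → ℂ
  | 0 => 0
  | k + 1 => f k

theorem coeff_sub (u t : HardySpace) (b : ℂ) (m : ℕ) : (u - b • t) m = u m - b * t m := rfl

theorem memS (f : HardySpace) :
    Memℓp (E := fun _ : ℕ => ℂ) (sf (fun k => f k)) 2 := by
  have h := lp.memℓp f
  rw [memℓp_gen_iff (by norm_num)] at h ⊢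
  rw [← summable_nat_add_iff 1]
  exact h

/-- shift vector -/
noncomputable def Sv (f : HardySpace) : HardySpace :=
  ⟨sf (fun k => f k), memS f⟩

theorem Sv_zero (f : HardySpace) : Sv f 0 = 0 := rfl
theorem Sv_succ (f : HardySpace) (k : ℕ) : Sv f (k + 1) = f k := rfl

theorem norm_sq_eq (f : HardySpace) : ‖f‖ ^ 2 = ∑' m, ‖f m‖ ^ 2 := by
  have h := lp.norm_rpow_eq_tsum (p := 2) (by norm_num) f
  simpa using h

theorem summable_sq (f : HardySpace) : Summable fun m => ‖f m‖ ^ 2 := by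
  have h := lp.memℓp f
  rw [memℓp_gen_iff (by norm_num)] at h
  simpa using h

theorem Sv_norm (f : HardySpace) : ‖Sv f‖ = ‖f‖ := by
  have h : ‖Sv f‖ ^ 2 = ‖f‖ ^ 2 := by
    rw [norm_sq_eq, norm_sq_eq, (summable_sq (Sv f)).tsum_eq_zero_add]
    simp [Sv_zero, Sv_succ]
  exact (sq_eq_sq₀ (norm_nonneg _) (norm_nonneg _)).1 h

/-- the shift -/
noncomputable def S : HardySpace →L[ℂ] HardySpace :=
  LinearMap.mkContinuous
    { toFun := Sv
      map_add' := by
        intro f g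
        ext m
        cases m with
        | zero => simp [Sv_zero]
        | succ k => simp [Sv_succ]
      map_smul' := by
        intro c g
        ext m
        cases m with
        | zero => simp [Sv_zero]
        | succ k => simp [Sv_succ] } 1 (by intro f; simp [Sv_norm])

theorem S_zero (f : HardySpace) : S f 0 = 0 := rfl
theorem S_succ (f : HardySpace) (k : ℕ) : S f (k + 1) = f k := rfl
theorem S_norm (f : HardySpace) : ‖S f‖ = ‖f‖ := Sv_norm f

theorem pow_norm (n : ℕ) (f : HardySpace) : ‖(S ^ n) f‖ = ‖f‖ := by
  induction n with
  | zero => simp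
  | succ n ih => rw [pow_succ', mul_apply_eq_comp, S_norm, ih]

theorem pow_lt (n : ℕ) (f : HardySpace) (m : ℕ) (h : m < n) : (S ^ n) f m = 0 := by
  induction n generalizing m with
  | zero => omega
  | succ n ih =>
    rw [pow_succ', mul_apply_eq_comp]
    cases m with
    | zero => exact S_zero _
    | succ k => rw [S_succ]; exact ih k (by omega)

theorem pow_add' (n : ℕ) (f : HardySpace) (m : ℕ) : (S ^ n) f (m + n) = f m := by
  induction n with
  | zero => simp
  | succ n ih =>
    rw [pow_succ', mul_apply_eq_comp, ← add_assoc, S_succ, ih]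

theorem coeff_le (f : HardySpace) (m : ℕ) : ‖f m‖ ≤ ‖f‖ :=
  lp.norm_apply_le_norm (by norm_num) f m

theorem summ (f : HardySpace) (w : ℂ) (hw : ‖w‖ < 1) : Summable fun m => f m * w ^ m := by
  refine Summable.of_norm_bounded
    ((summable_geometric_of_lt_one (norm_nonneg w) hw).mul_left ‖f‖) ?_
  intro m
  rw [norm_mul, norm_pow]
  gcongr
  exact coeff_le f m

theorem toFun_S (f : HardySpace) (w : ℂ) (hw : ‖w‖ < 1) :
    HardySpace.toFun (S f) w = w * HardySpace.toFun f w := by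
  unfold HardySpace.toFun
  rw [(summ (S f) w hw).tsum_eq_zero_add, ← tsum_mul_left]
  simp only [S_zero, S_succ, zero_mul, zero_add]
  congr 1
  ext m
  ring

theorem hasFP (f : HardySpace) :
    HasFPowerSeriesAt (HardySpace.toFun f)
      (FormalMultilinearSeries.ofScalars ℂ (fun m => f m)) 0 := by
  refine ⟨1, ?_, one_pos, ?_⟩
  · refine FormalMultilinearSeries.le_radius_of_bound _ (r := 1) ‖f‖ ?_
    intro n
    simp only [NNReal.coe_one, one_pow, mul_one]
    rw [FormalMultilinearSeries.ofScalars_norm]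
    exact coeff_le f n
  · intro w hw
    have hw' : ‖w‖ < 1 := by
      have h2 : ‖w‖₊ < 1 := by simpa [edist_zero_right, enorm_eq_nnnorm] using hw
      exact_mod_cast h2
    have := (summ f w hw').hasSum
    simpa [HardySpace.toFun, FormalMultilinearSeries.ofScalars_apply_eq, mul_comm] using this

theorem toFun_inj (f g : HardySpace)
    (h : ∀ w ∈ Metric.ball (0 : ℂ) 1, HardySpace.toFun f w = HardySpace.toFun g w) : f = g := by
  have h1 := hasFP f
  have h2 := hasFP g
  have e : HardySpace.toFun g =ᶠ[𝓝 0] HardySpace.toFun f := by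
    filter_upwards [Metric.ball_mem_nhds (0 : ℂ) one_pos] with w hw using (h w hw).symm
  have h3 := h1.eq_formalMultilinearSeries (h2.congr e)
  have h4 := FormalMultilinearSeries.ofScalars_series_injective ℂ ℂ h3
  ext m
  exact congrFun h4 m

theorem exists_v (n : ℕ) (a : ℝ) (ha : 0 < a) (ha1 : a < 1) (p : HardySpace) :
    ∃ v : HardySpace, v = p + (a : ℂ) • (S ^ n) v := by
  have hT : ‖(S ^ n : HardySpace →L[ℂ] HardySpace)‖ ≤ 1 :=
    ContinuousLinearMap.opNorm_le_bound _ zero_le_one (fun f => by rw [pow_norm, one_mul])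
  have hlt : ‖(a : ℂ) • (S ^ n : HardySpace →L[ℂ] HardySpace)‖ < 1 := by
    rw [norm_smul, Complex.norm_real, Real.norm_of_nonneg ha.le]
    nlinarith
  let U := Units.oneSub _ hlt
  refine ⟨(U⁻¹ : (HardySpace →L[ℂ] HardySpace)ˣ).val p, ?_⟩
  have h : (U.val * (U⁻¹).val) p = p := by rw [Units.mul_inv]; rfl
  rw [mul_apply_eq_comp] at h
  have h2 : ∀ q, U.val q = q - (a : ℂ) • (S ^ n) q := fun q => by
    rw [Units.val_oneSub]; rfl
  rw [h2] at h
  exact sub_eq_iff_eq_add.1 h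

theorem orth (n : ℕ) (p v : HardySpace) (hp : ∀ m, n ≤ m → p m = 0) :
    inner ℂ p ((S ^ n) v) = 0 := by
  rw [lp.inner_eq_tsum]
  convert tsum_zero with m
  rcases lt_or_ge m n with h | h
  · rw [pow_lt n v m h, inner_zero_right]
  · rw [hp m h, inner_zero_left]

theorem exists_x (n : ℕ) (a : ℝ) (ha : 0 < a) (ha1 : a < 1) (p : HardySpace)
    (hp : ∀ m, n ≤ m → p m = 0) :
    ∃ x v : HardySpace, x = v - ((a⁻¹ : ℝ) : ℂ) • (S ^ n) v ∧
      a ^ 2 * ‖x - p‖ ^ 2 = (1 - a ^ 2) * ‖p‖ ^ 2 := by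
  obtain ⟨v, hv⟩ := exists_v n a ha ha1 p
  refine ⟨_, v, rfl, ?_⟩
  have h1 : ‖v‖ ^ 2 = ‖p‖ ^ 2 + a ^ 2 * ‖v‖ ^ 2 := by
    have h := norm_add_sq_eq_norm_sq_add_norm_sq_of_inner_eq_zero (𝕜 := ℂ) p
      ((a : ℂ) • (S ^ n) v) (by rw [inner_smul_right, orth n p v hp, mul_zero])
    rw [← hv, norm_smul, pow_norm, Complex.norm_real, Real.norm_of_nonneg ha.le] at h
    nlinarith
  have h2 : v - ((a⁻¹ : ℝ) : ℂ) • (S ^ n) v - p = ((a - a⁻¹ : ℝ) : ℂ) • (S ^ n) v := by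
    have : v - p = (a : ℂ) • (S ^ n) v := sub_eq_iff_eq_add'.2 hv
    rw [sub_right_comm, this, ← sub_smul]
    push_cast
    rfl
  rw [h2, norm_smul, pow_norm, Complex.norm_real, mul_pow, Real.norm_eq_abs, sq_abs]
  have h3 : ‖p‖ ^ 2 = (1 - a ^ 2) * ‖v‖ ^ 2 := by linarith
  rw [h3]
  field_simp
  ring

theorem bound (n : ℕ) (a ε : ℝ) (ha : 0 < a) (ha1 : a < 1) (hε : 0 ≤ ε) (y u : HardySpace)
    (hy : y = u - ((a⁻¹ : ℝ) : ℂ) • (S ^ n) u) (h : ∀ m, n ≤ m → ‖y m‖ ≤ ε)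
    (i : ℕ) (hi : i < n) : ‖y i‖ ≤ a * ε / (1 - a) := by
  have h0 : y i = u i := by
    rw [hy, coeff_sub, pow_lt n u i hi, mul_zero, sub_zero]
  have h1 : ∀ m, ‖u m‖ ≤ a * (‖u (m + n)‖ + ε) := by
    intro m
    have e : u m = (a : ℂ) * (u (m + n) - y (m + n)) := by
      have haC : (a : ℂ) ≠ 0 := by exact_mod_cast ha.ne'
      rw [hy, coeff_sub, pow_add' n u m]
      push_cast
      field_simp
      ring
    rw [e, norm_mul, Complex.norm_real, Real.norm_of_nonneg ha.le]
    gcongr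
    exact (norm_sub_le _ _).trans (by gcongr; exact h _ (by omega))
  have h2 : ∀ K m, ‖u m‖ ≤ a ^ K * ‖u‖ + a * ε / (1 - a) := by
    intro K
    induction K with
    | zero =>
      intro m
      have : 0 ≤ a * ε / (1 - a) := div_nonneg (by positivity) (by linarith)
      have := coeff_le u m
      simp only [pow_zero, one_mul]
      linarith
    | succ K ih =>
      intro m
      have hne : 1 - a ≠ 0 := by linarith
      calc ‖u m‖ ≤ a * (‖u (m + n)‖ + ε) := h1 m
        _ ≤ a * ((a ^ K * ‖u‖ + a * ε / (1 - a)) + ε) := by gcongr; exact ih _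
        _ = a ^ (K + 1) * ‖u‖ + a * ε / (1 - a) := by field_simp; ring
  have h3 : Tendsto (fun K : ℕ => a ^ K * ‖u‖ + a * ε / (1 - a)) atTop
      (𝓝 (0 * ‖u‖ + a * ε / (1 - a))) :=
    ((tendsto_pow_atTop_nhds_zero_of_lt_one ha.le ha1).mul_const _).add_const _
  rw [h0]
  have := ge_of_tendsto' h3 (fun K => h2 K i)
  simpa using this

theorem exists_p (c : HardySpace) (r : ℝ) (hr : 0 < r) :
    ∃ (p : HardySpace) (M : ℕ), ‖p - c‖ < r ∧ ∀ m, M ≤ m → p m = 0 := by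
  have h := lp.hasSum_single (p := 2) (by norm_num) c
  obtain ⟨s, hs⟩ := (Metric.tendsto_nhds.1 h r hr).exists
  refine ⟨_, s.sup id + 1, by rwa [← dist_eq_norm], ?_⟩
  intro m hm
  rw [lp.coeFn_sum, Finset.sum_apply]
  refine Finset.sum_eq_zero (fun i hi => ?_)
  have : i ≤ s.sup id := Finset.le_sup (f := id) hi
  rw [lp.single_apply_ne]
  omega

theorem exists_a (P R : ℝ) (hP : 0 ≤ P) (hR : 0 < R) :
    ∃ a : ℝ, 0 < a ∧ a < 1 ∧ (1 - a ^ 2) * P ≤ a ^ 2 * R := by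
  have hc : Tendsto (fun a : ℝ => a ^ 2 * R - (1 - a ^ 2) * P) (𝓝[<] 1)
      (𝓝 (1 ^ 2 * R - (1 - 1 ^ 2) * P)) := by
    apply Tendsto.mono_left _ nhdsWithin_le_nhds
    exact Continuous.tendsto (by fun_prop) _
  have h1 := hc.eventually (lt_mem_nhds (a := 0) (by simpa using hR))
  have h2 : Set.Ioo (0 : ℝ) 1 ∈ 𝓝[<] (1 : ℝ) := Ioo_mem_nhdsLT one_pos
  obtain ⟨a, h, h3⟩ := (h1.and h2).exists
  exact ⟨a, h3.1, h3.2, by linarith⟩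

end HardyAux

open HardyAux

/-- The algebra of multiplication operators by bounded analytic functions on the unit
disc is not localizing on the Hardy space `H²(𝔻)`. -/
theorem hardy_Hinfty_not_localizing :
    ¬ IsLocalizing {X : HardySpace →L[ℂ] HardySpace |
        ∃ φ : ℂ → ℂ, DifferentiableOn ℂ φ (Metric.ball 0 1) ∧
          (∃ C : ℝ, ∀ w ∈ Metric.ball (0 : ℂ) 1, ‖φ w‖ ≤ C) ∧
          ∀ (f : HardySpace) (w : ℂ), w ∈ Metric.ball (0 : ℂ) 1 →
            HardySpace.toFun (X f) w = φ w * HardySpace.toFun f w} := by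
  rintro ⟨c, r, hr, -, H⟩
  obtain ⟨p, M, hpc, hp⟩ := exists_p c (r / 2) (by positivity)
  obtain ⟨a, ha, ha1, haP⟩ := exists_a (‖p‖ ^ 2) ((r / 2) ^ 2) (by positivity) (by positivity)
  have hx := fun n : ℕ => exists_x (n + M) a ha ha1 p (fun m hm => hp m (by omega))
  choose x v hxv hxp using hx
  obtain ⟨n, X, y, hn, hX, -, hy0, hlim⟩ := H x (by
    intro n
    have h1 : ‖x n - p‖ ≤ r / 2 := by
      have h2 : a ^ 2 * ‖x n - p‖ ^ 2 ≤ a ^ 2 * (r / 2) ^ 2 := by rw [hxp]; exact haP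
      have h3 := le_of_mul_le_mul_left h2 (by positivity)
      exact (sq_le_sq₀ (norm_nonneg _) (by positivity)).1 h3
    rw [Metric.mem_closedBall, dist_eq_norm]
    have := norm_sub_le_norm_sub_add_norm_sub (x n) p c
    linarith)
  apply hy0
  have hcomm : ∀ j f, X j (S f) = S (X j f) := by
    intro j f
    obtain ⟨φ, -, -, hφ⟩ := hX j
    apply toFun_inj
    intro w hw
    have hw' : ‖w‖ < 1 := by simpa using hw
    rw [hφ _ _ hw, toFun_S _ _ hw', toFun_S _ _ hw', hφ _ _ hw]
    ring
  have hcommn : ∀ j k f, X j ((S ^ k) f) = (S ^ k) (X j f) := by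
    intro j k f
    induction k with
    | zero => simp
    | succ k ih =>
      rw [pow_succ', mul_apply_eq_comp, mul_apply_eq_comp, hcomm, ih]
  have hcoef : Tendsto (fun m => ‖y m‖) atTop (𝓝 0) := by
    have h := (summable_sq y).tendsto_atTop_zero
    have h2 := h.sqrt
    simpa using h2
  have hkey : ∀ i, ∀ ε > 0, ‖y i‖ ≤ ε + a * (ε + ε) / (1 - a) := by
    intro i ε hε
    obtain ⟨N, hN⟩ := eventually_atTop.1 (hcoef.eventually (gt_mem_nhds hε))
    have hc := Metric.tendsto_atTop.1 hlim ε hε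
    obtain ⟨J, hJ⟩ := hc
    let j := J + N + i + 1
    have hj := hJ j (by omega)
    rw [dist_eq_norm] at hj
    have hnj : j ≤ n j := hn.id_le j
    have hd : ∀ m, ‖X j (x (n j)) m - y m‖ ≤ ε := fun m =>
      (coeff_le (X j (x (n j)) - y) m).trans hj.le
    have hb := bound (n j + M) a (ε + ε) ha ha1 (by positivity) (X j (x (n j))) (X j (v (n j)))
      (by rw [← hcommn, ← map_smul, ← map_sub, ← hxv])
      (fun m hm => by
        have h1 := hd m
        have h2 := hN m (by omega)
        have h3 := norm_sub_norm_le (X j (x (n j)) m) (y m)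
        linarith) i (by omega)
    have h1 := hd i
    have h3 := norm_sub_norm_le (y i) (X j (x (n j)) i)
    rw [norm_sub_rev] at h3
    linarith
  ext i
  have hl : Tendsto (fun ε : ℝ => ε + a * (ε + ε) / (1 - a)) (𝓝[>] 0)
      (𝓝 (0 + a * (0 + 0) / (1 - a))) := by
    apply Tendsto.mono_left _ nhdsWithin_le_nhds
    exact Continuous.tendsto (f := fun ε : ℝ => ε + a * (ε + ε) / (1 - a)) (by fun_prop) _
  have := ge_of_tendsto hl (by
    filter_upwards [self_mem_nhdsWithin] with ε hε using hkey i ε hε)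
  simpa using this
end

section
/- Let μ be the normalized Haar measure on the torus 𝕋 = {z ∈ ℂ : |z| = 1}. For any pair of measurable sets A, B ⊆ 𝕋, one has lim_{n→∞} μ(A ∩ {z ∈ 𝕋 : z^n ∈ B}) = μ(A) μ(B). -/
open Filter Topology MeasureTheory

noncomputable instance : MeasurableSpace Circle := borel Circle
instance : BorelSpace Circle := ⟨rfl⟩

theorem aux_map_toCircle {T : ℝ} [hT : Fact (0 < T)]
    (μ : Measure Circle) [μ.IsHaarMeasure] [IsProbabilityMeasure μ] :
    MeasurePreserving (AddCircle.toCircle (T := T)) AddCircle.haarAddCircle μ := by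
  have hm : Measurable (AddCircle.toCircle (T := T)) := AddCircle.continuous_toCircle.measurable
  refine ⟨hm, ?_⟩
  have hp : IsProbabilityMeasure
      (Measure.map (AddCircle.toCircle (T := T)) AddCircle.haarAddCircle) :=
    Measure.isProbabilityMeasure_map hm.aemeasurable
  have hinv : (Measure.map (AddCircle.toCircle (T := T))
      AddCircle.haarAddCircle).IsMulLeftInvariant := by
    constructor
    intro g
    obtain ⟨x, rfl⟩ : ∃ x : AddCircle T, AddCircle.toCircle x = g := by
      obtain ⟨x, hx⟩ := (AddCircle.homeomorphCircle hT.out.ne').surjective g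
      exact ⟨x, by rw [← hx, AddCircle.homeomorphCircle_apply]⟩
    rw [Measure.map_map (measurable_const_mul _) hm]
    have : ((fun y => AddCircle.toCircle x * y) ∘ AddCircle.toCircle (T := T))
        = AddCircle.toCircle (T := T) ∘ (fun y => x + y) := by
      ext y; simp [AddCircle.toCircle_add]
    rw [this, ← Measure.map_map hm (measurable_const_add _), map_add_left_eq_self]
  have : (Measure.map (AddCircle.toCircle (T := T))
      AddCircle.haarAddCircle).IsHaarMeasure :=
    Measure.isHaarMeasure_of_isCompact_nonempty_interior _ Set.univ isCompact_univ
      (by simp) (by simp) (by simp)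
  exact Measure.isHaarMeasure_eq_of_isProbabilityMeasure _ _

theorem aux_mp {T : ℝ} [hT : Fact (0 < T)] (n : ℕ) :
    MeasurePreserving (fun y : AddCircle T => (n + 1) • y)
      AddCircle.haarAddCircle AddCircle.haarAddCircle := by
  have := Measure.measurePreserving_zsmul (AddCircle.haarAddCircle (T := T)) (n := (n : ℤ) + 1) (by omega)
  convert this using 2 with y
  exact_mod_cast (natCast_zsmul y (n+1)).symm

theorem aux_comp {T : ℝ} [hT : Fact (0 < T)] (n : ℕ) (k : ℤ) :
    Lp.compMeasurePreserving _ (aux_mp n) (fourierLp (T := T) 2 k)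
      = fourierLp 2 (((n : ℤ) + 1) * k) := by
  apply Lp.ext
  refine (Lp.coeFn_compMeasurePreserving _ _).trans ?_
  have h1 := (aux_mp (T := T) n).quasiMeasurePreserving.ae_eq_comp (coeFn_fourierLp (T := T) 2 k)
  refine h1.trans ?_
  refine EventuallyEq.trans ?_ (coeFn_fourierLp (T := T) 2 _).symm
  refine Eventually.of_forall fun x => ?_
  simp only [Function.comp, fourier_apply]
  congr 2
  rw [← natCast_zsmul, smul_smul, mul_comm]
  push_cast
  rfl

theorem aux_l2 {T : ℝ} [hT : Fact (0 < T)]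
    (f g : Lp ℂ 2 (AddCircle.haarAddCircle (T := T))) :
    Tendsto (fun n : ℕ => inner ℂ f (Lp.compMeasurePreserving _ (aux_mp n) g)
      - inner ℂ f (fourierLp 2 0) * inner ℂ (fourierLp 2 0) g) atTop (𝓝 0) := by
  have hg : g ∈ (Submodule.span ℂ (Set.range (fourierLp (T := T) 2))).topologicalClosure := by
    rw [span_fourierLp_closure_eq_top (by norm_num)]; trivial
  have key : ∀ g ∈ Submodule.span ℂ (Set.range (fourierLp (T := T) 2)),
      Tendsto (fun n : ℕ => inner ℂ f (Lp.compMeasurePreserving _ (aux_mp n) g)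
      - inner ℂ f (fourierLp 2 0) * inner ℂ (fourierLp 2 0) g) atTop (𝓝 0) := by
    intro g hg
    induction hg using Submodule.span_induction with
    | mem x hx =>
      obtain ⟨k, rfl⟩ := hx
      simp only [aux_comp]
      have ho := orthonormal_iff_ite.1 (orthonormal_fourier (T := T)) 0 k
      rw [ho]
      by_cases hk : k = 0
      · subst hk; simp
      · have hs := (orthonormal_fourier (T := T)).inner_products_summable (x := f)
        have h0 := hs.tendsto_cofinite_zero
        have hinj : Function.Injective (fun n : ℕ => ((n : ℤ) + 1) * k) := by
          intro a b hab
          have := mul_right_cancel₀ hk hab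
          omega
        have h1 := h0.comp hinj.tendsto_cofinite
        rw [Nat.cofinite_eq_atTop] at h1
        simp only [if_neg (Ne.symm hk), mul_zero, sub_zero]
        rw [tendsto_zero_iff_norm_tendsto_zero]
        have h2 := h1.sqrt
        simp only [Real.sqrt_zero] at h2
        refine h2.congr fun n => ?_
        simp only [Function.comp]
        rw [Real.sqrt_sq (norm_nonneg _), norm_inner_symm]
    | zero => simp
    | add x y _ _ hx hy =>
      have := hx.add hy
      rw [add_zero] at this
      refine this.congr fun n => ?_
      rw [map_add, inner_add_right, inner_add_right]; ring
    | smul a x _ hx =>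
      have := hx.const_mul a
      rw [mul_zero] at this
      refine this.congr fun n => ?_
      have e : Lp.compMeasurePreserving _ (aux_mp n) (a • x)
        = a • Lp.compMeasurePreserving _ (aux_mp n) x :=
        (Lp.compMeasurePreservingₗ ℂ _ (aux_mp n)).map_smul a x
      rw [e, inner_smul_right, inner_smul_right]; ring
  have bound : ∀ (n : ℕ) (g : Lp ℂ 2 (AddCircle.haarAddCircle (T := T))),
      ‖inner ℂ f (Lp.compMeasurePreserving _ (aux_mp n) g)
      - inner ℂ f (fourierLp 2 0) * inner ℂ (fourierLp 2 0) g‖ ≤ 2 * ‖f‖ * ‖g‖ := by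
    intro n g
    have h1 : ‖fourierLp (T := T) 2 0‖ = 1 := (orthonormal_fourier (T := T)).1 0
    have h2 := norm_inner_le_norm (𝕜 := ℂ) f (Lp.compMeasurePreserving _ (aux_mp n) g)
    rw [Lp.norm_compMeasurePreserving] at h2
    have h3 := norm_inner_le_norm (𝕜 := ℂ) f (fourierLp (T := T) 2 0)
    have h4 := norm_inner_le_norm (𝕜 := ℂ) (fourierLp (T := T) 2 0) g
    rw [h1, mul_one] at h3
    rw [h1, one_mul] at h4
    refine (norm_sub_le _ _).trans ?_
    rw [norm_mul]
    have := mul_le_mul h3 h4 (norm_nonneg _) (norm_nonneg _)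
    linarith
  rw [Metric.tendsto_atTop]
  intro ε hε
  have hC : 0 < 2 * ‖f‖ + 1 := by positivity
  obtain ⟨p, hp, hgp⟩ := Metric.mem_closure_iff.1 hg (ε / 2 / (2 * ‖f‖ + 1)) (by positivity)
  obtain ⟨N, hN⟩ := Metric.tendsto_atTop.1 (key p hp) (ε / 2) (by positivity)
  refine ⟨N, fun n hn => ?_⟩
  have h1 := hN n hn
  have h2 := bound n (g - p)
  rw [map_sub, inner_sub_right, inner_sub_right] at h2
  rw [dist_zero_right] at h1 ⊢
  rw [dist_eq_norm, lt_div_iff₀ hC] at hgp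
  have h3 : 2 * ‖f‖ * ‖g - p‖ < ε / 2 := by nlinarith [norm_nonneg (g - p)]
  calc _ = ‖(inner ℂ f (Lp.compMeasurePreserving _ (aux_mp n) p)
      - inner ℂ f (fourierLp 2 0) * inner ℂ (fourierLp 2 0) p) +
      (inner ℂ f (Lp.compMeasurePreserving _ (aux_mp n) g) -
        inner ℂ f (Lp.compMeasurePreserving _ (aux_mp n) p)
      - inner ℂ f (fourierLp 2 0) * (inner ℂ (fourierLp 2 0) g - inner ℂ (fourierLp 2 0) p))‖ := by
        congr 1; ring
    _ < ε := by
        refine (norm_add_le _ _).trans_lt ?_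
        linarith

theorem aux_set {T : ℝ} [hT : Fact (0 < T)] (A B : Set (AddCircle T))
    (hA : MeasurableSet A) (hB : MeasurableSet B) :
    Tendsto (fun n : ℕ => (AddCircle.haarAddCircle (T := T)).real
      (A ∩ (fun y => (n + 1) • y) ⁻¹' B)) atTop
      (𝓝 ((AddCircle.haarAddCircle (T := T)).real A * (AddCircle.haarAddCircle (T := T)).real B)) := by
  have h := aux_l2 (T := T) (indicatorConstLp 2 hA (measure_ne_top _ _) (1 : ℂ))
    (indicatorConstLp 2 hB (measure_ne_top _ _) (1 : ℂ))
  have e0 : fourierLp (T := T) 2 0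
      = indicatorConstLp 2 MeasurableSet.univ (measure_ne_top _ _) (1 : ℂ) := by
    apply Lp.ext
    refine (coeFn_fourierLp (T := T) 2 0).trans (EventuallyEq.trans ?_ indicatorConstLp_coeFn.symm)
    exact Eventually.of_forall fun x => by simp
  simp only [e0, Lp.indicatorConstLp_compMeasurePreserving,
    L2.inner_indicatorConstLp_one_indicatorConstLp_one, Set.inter_univ, Set.univ_inter] at h
  have h' := (Complex.continuous_re.tendsto _).comp (h.add_const
    (((AddCircle.haarAddCircle (T := T)).real A * (AddCircle.haarAddCircle (T := T)).real B : ℝ) : ℂ))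
  rw [zero_add, Complex.ofReal_re] at h'
  refine h'.congr fun n => ?_
  simp [Function.comp]

/-- For the normalized Haar measure `μ` on the unit circle `𝕋` and any measurable sets
`A, B ⊆ 𝕋`, one has `μ(A ∩ {z : zⁿ ∈ B}) → μ(A) μ(B)` as `n → ∞`. -/
theorem haar_measure_inter_pow_preimage_tendsto
    (μ : Measure Circle) [μ.IsHaarMeasure] [IsProbabilityMeasure μ]
    (A B : Set Circle) (hA : MeasurableSet A) (hB : MeasurableSet B) :
    Tendsto (fun n : ℕ => μ (A ∩ {z : Circle | z ^ n ∈ B})) atTop (𝓝 (μ A * μ B)) := by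
  have hmp := aux_map_toCircle (T := 1) μ
  have h := aux_set (T := 1) _ _ (hmp.measurable hA) (hmp.measurable hB)
  rw [← tendsto_add_atTop_iff_nat 1]
  rw [measureReal_def, measureReal_def, hmp.measure_preimage hA.nullMeasurableSet,
    hmp.measure_preimage hB.nullMeasurableSet, ← ENNReal.toReal_mul] at h
  rw [← ENNReal.tendsto_toReal_iff (fun _ => measure_ne_top _ _)
    (ENNReal.mul_ne_top (measure_ne_top _ _) (measure_ne_top _ _))]
  refine h.congr fun n => ?_
  have hm : MeasurableSet (A ∩ {z : Circle | z ^ (n + 1) ∈ B}) :=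
    hA.inter ((continuous_pow (n + 1)).measurable hB)
  rw [measureReal_def, ← hmp.measure_preimage hm.nullMeasurableSet]
  congr 2
  ext x
  simp [AddCircle.toCircle_nsmul]
end

section
/- Let (z_j)_{j≥0} be a sequence of pairwise distinct complex numbers with |z_j| < 1 for all j and such that the closure of {z_j : j ≥ 0} contains the unit circle ∂𝔻, let (e_j) be an orthonormal basis of an infinite-dimensional separable complex Hilbert space H, let T be the diagonal operator with T e_j = z_j e_j, and let 𝓡 = {p(T) : p a polynomial}. Suppose there is a sequence (w_p)_{p≥1} of pairwise distinct cluster points of {z_j : j ≥ 0} lying in the open unit disc 𝔻 such that Σ_{p≥1} (1 − |w_p|) = ∞. Then 𝓡 is not a localizing algebra. -/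
open Filter Topology

open Polynomial in
lemma aux_max (Q : Polynomial ℂ) (M : ℝ) (h : ∀ u : ℂ, ‖u‖ = 1 → ‖Q.eval u‖ ≤ M) (u : ℂ)
    (hu : ‖u‖ ≤ 1) : ‖Q.eval u‖ ≤ M := by
  have hd : DiffContOnCl ℂ (fun u => Q.eval u) (Metric.ball (0 : ℂ) 1) :=
    (Polynomial.differentiable Q).diffContOnCl
  refine Complex.norm_le_of_forall_mem_frontier_norm_le Metric.isBounded_ball hd ?_ ?_
  · intro v hv
    rw [frontier_ball _ one_ne_zero] at hv
    exact h v (by simpa using hv)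
  · rw [closure_ball _ one_ne_zero]
    simpa using hu

lemma aux_circle (a u : ℂ) (hu : ‖u‖ = 1) : ‖1 - (starRingEnd ℂ a) * u‖ = ‖u - a‖ := by
  have h1 : u * (starRingEnd ℂ) u = 1 := by
    rw [Complex.mul_conj, Complex.normSq_eq_norm_sq, hu]; simp
  have h2 : 1 - (starRingEnd ℂ a) * u = u * (starRingEnd ℂ) (u - a) := by
    rw [map_sub, mul_sub, h1]; ring
  rw [h2, norm_mul, hu, one_mul, RCLike.norm_conj]

open Polynomial in
lemma aux_schwarz (P : Polynomial ℂ) (M : ℝ) (h : ∀ u : ℂ, ‖u‖ = 1 → ‖P.eval u‖ ≤ M)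
    (w : ℕ → ℂ) (hwd : Function.Injective w) (S : Finset ℕ)
    (h0 : ∀ p ∈ S, P.eval (w p) = 0) (u : ℂ) (hu : ‖u‖ ≤ 1) :
    ‖P.eval u‖ * ∏ p ∈ S, ‖1 - (starRingEnd ℂ (w p)) * u‖ ≤ M * ∏ p ∈ S, ‖u - w p‖ := by
  have hdvd : (∏ p ∈ S, (X - C (w p))) ∣ P := by
    refine Finset.prod_dvd_of_coprime ?_ ?_
    · intro a _ b _ hab
      exact Polynomial.isCoprime_X_sub_C_of_isUnit_sub
        (sub_ne_zero.mpr (fun hh => hab (hwd hh))).isUnit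
    · intro p hp
      exact Polynomial.dvd_iff_isRoot.mpr (h0 p hp)
  obtain ⟨Q, rfl⟩ := hdvd
  have key := aux_max (Q * ∏ p ∈ S, (1 - C (starRingEnd ℂ (w p)) * X)) M (by
    intro v hv
    refine le_trans (le_of_eq ?_) (h v hv)
    simp only [eval_mul, eval_prod, eval_sub, eval_one, eval_C, eval_X, norm_mul, norm_prod]
    rw [mul_comm]
    congr 1
    exact Finset.prod_congr rfl fun p _ => aux_circle _ _ hv) u hu
  simp only [eval_mul, eval_prod, eval_sub, eval_one, eval_C, eval_X, norm_mul, norm_prod] at key ⊢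
  have hnn : 0 ≤ ∏ p ∈ S, ‖u - w p‖ := Finset.prod_nonneg fun _ _ => norm_nonneg _
  nlinarith [mul_le_mul_of_nonneg_right key hnn]

lemma aux_den (a u : ℂ) (ha : ‖a‖ < 1) (hu : ‖u‖ ≤ 1) :
    1 - ‖a‖ ≤ ‖1 - (starRingEnd ℂ a) * u‖ := by
  have h1 : ‖(starRingEnd ℂ a) * u‖ ≤ ‖a‖ := by
    rw [norm_mul, RCLike.norm_conj]
    nlinarith [norm_nonneg a]
  have h2 := norm_sub_norm_le (1 : ℂ) ((starRingEnd ℂ a) * u)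
  rw [norm_one] at h2
  linarith

lemma aux_factor (a u : ℂ) (ha : ‖a‖ < 1) (hu : ‖u‖ < 1) :
    ‖u - a‖ ^ 2 ≤ Real.exp (-((1 - ‖u‖ ^ 2) / 4) * (1 - ‖a‖)) *
      ‖1 - (starRingEnd ℂ a) * u‖ ^ 2 := by
  have h1 : ‖1 - (starRingEnd ℂ a) * u‖ ^ 2 - ‖u - a‖ ^ 2 = (1 - ‖a‖ ^ 2) * (1 - ‖u‖ ^ 2) := by
    simp only [← Complex.normSq_eq_norm_sq, Complex.normSq_apply]
    simp
    ring
  have h2 : ‖1 - (starRingEnd ℂ a) * u‖ ≤ 2 := by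
    have := norm_sub_le (1 : ℂ) ((starRingEnd ℂ a) * u)
    rw [norm_mul, RCLike.norm_conj, norm_one] at this
    nlinarith [norm_nonneg a, norm_nonneg u]
  have h3 := Real.add_one_le_exp (-((1 - ‖u‖ ^ 2) / 4) * (1 - ‖a‖))
  have h4 : ‖1 - (starRingEnd ℂ a) * u‖ ^ 2 ≤ 4 := by
    nlinarith [norm_nonneg (1 - (starRingEnd ℂ a) * u)]
  have h5 : 0 ≤ 1 - ‖u‖ ^ 2 := by nlinarith [norm_nonneg u]
  have h6 : 1 - ‖a‖ ≤ 1 - ‖a‖ ^ 2 := by nlinarith [norm_nonneg a]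
  have h7 := mul_le_mul_of_nonneg_right h3 (sq_nonneg ‖1 - (starRingEnd ℂ a) * u‖)
  have h8 : (1 - ‖u‖ ^ 2) * (1 - ‖a‖) * ‖1 - (starRingEnd ℂ a) * u‖ ^ 2 ≤
      (1 - ‖u‖ ^ 2) * (1 - ‖a‖) * 4 :=
    mul_le_mul_of_nonneg_left h4 (mul_nonneg h5 (by linarith))
  have h9 := mul_le_mul_of_nonneg_right h6 h5
  nlinarith

lemma aux_blaschke (w : ℕ → ℂ) (hw1 : ∀ p, ‖w p‖ < 1)
    (hsum : ¬ Summable fun p => 1 - ‖w p‖) (u : ℂ) (hu : ‖u‖ < 1) (ε : ℝ) (hε : 0 < ε) :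
    ∃ N : ℕ, ∏ p ∈ Finset.range N, ‖u - w p‖ ≤
      ε * ∏ p ∈ Finset.range N, ‖1 - (starRingEnd ℂ (w p)) * u‖ := by
  have ht : Tendsto (fun N => ∑ p ∈ Finset.range N, (1 - ‖w p‖)) atTop atTop :=
    (not_summable_iff_tendsto_nat_atTop_of_nonneg (fun p => by linarith [hw1 p])).mp hsum
  have hc : 0 < (1 - ‖u‖ ^ 2) / 4 := by nlinarith [norm_nonneg u]
  have h1 : Tendsto (fun N => Real.exp (-((1 - ‖u‖ ^ 2) / 4) *
      ∑ p ∈ Finset.range N, (1 - ‖w p‖))) atTop (𝓝 0) :=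
    Real.tendsto_exp_atBot.comp (ht.const_mul_atTop_of_neg (neg_neg_of_pos hc))
  obtain ⟨N, hN⟩ := (h1.eventually (gt_mem_nhds (pow_pos hε 2))).exists
  refine ⟨N, ?_⟩
  have hnn : 0 ≤ ∏ p ∈ Finset.range N, ‖1 - (starRingEnd ℂ (w p)) * u‖ :=
    Finset.prod_nonneg fun _ _ => norm_nonneg _
  refine abs_le_of_sq_le_sq' ?_ (mul_nonneg hε.le hnn) |>.2
  rw [mul_pow, ← Finset.prod_pow, ← Finset.prod_pow]
  calc _ ≤ ∏ p ∈ Finset.range N, (Real.exp (-((1 - ‖u‖ ^ 2) / 4) * (1 - ‖w p‖)) *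
      ‖1 - (starRingEnd ℂ (w p)) * u‖ ^ 2) :=
        Finset.prod_le_prod (fun _ _ => sq_nonneg _) (fun p _ => aux_factor _ _ (hw1 p) hu)
    _ = Real.exp (-((1 - ‖u‖ ^ 2) / 4) * ∑ p ∈ Finset.range N, (1 - ‖w p‖)) *
        ∏ p ∈ Finset.range N, ‖1 - (starRingEnd ℂ (w p)) * u‖ ^ 2 := by
        rw [Finset.prod_mul_distrib, ← Real.exp_sum, Finset.mul_sum]
    _ ≤ _ := mul_le_mul_of_nonneg_right hN.le (Finset.prod_nonneg fun _ _ => sq_nonneg _)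

open Polynomial in
lemma aux_limit (w : ℕ → ℂ) (hwd : Function.Injective w) (hw1 : ∀ p, ‖w p‖ < 1)
    (hsum : ¬ Summable fun p => 1 - ‖w p‖) (g : ℕ → Polynomial ℂ)
    (hg : ∀ j, ∀ u : ℂ, ‖u‖ ≤ 1 → ‖(g j).eval u‖ ≤ 1)
    (h0 : ∀ p, Tendsto (fun j => (g j).eval (w p)) atTop (𝓝 0)) (u : ℂ) (hu : ‖u‖ < 1) :
    Tendsto (fun j => (g j).eval u) atTop (𝓝 0) := by
  have hC : ∀ Q : Polynomial ℂ, ∃ M : ℝ, ∀ v : ℂ, ‖v‖ ≤ 1 → ‖Q.eval v‖ ≤ M := by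
    intro Q
    obtain ⟨M, hM⟩ := (isCompact_closedBall (0 : ℂ) 1).exists_bound_of_continuousOn
      (f := fun v => Q.eval v) Q.continuous.continuousOn
    exact ⟨M, fun v hv => hM v (by simpa using hv)⟩
  choose K hK using hC
  rw [NormedAddGroup.tendsto_nhds_zero]
  intro ε hε
  obtain ⟨N, hN⟩ := aux_blaschke w hw1 hsum u hu (ε / 4) (by linarith)
  set S := Finset.range N
  set δ : ℕ → ℝ := fun j => ∑ p ∈ S, ‖(g j).eval (w p)‖ * K (Lagrange.basis S w p) with hδ
  have hδ0 : Tendsto δ atTop (𝓝 0) := by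
    have : Tendsto δ atTop (𝓝 (∑ p ∈ S, 0 * K (Lagrange.basis S w p))) := by
      refine tendsto_finsetSum _ fun p _ => ?_
      exact Tendsto.mul_const _ (by simpa using (h0 p).norm)
    simpa using this
  have hpos : 0 < ∏ p ∈ S, ‖1 - (starRingEnd ℂ (w p)) * u‖ :=
    Finset.prod_pos fun p _ => lt_of_lt_of_le (by linarith [hw1 p]) (aux_den _ u (hw1 p) hu.le)
  filter_upwards [hδ0.eventually (gt_mem_nhds (show (0 : ℝ) < min 1 (ε / 4) by positivity))]
    with j hj
  set L := Lagrange.interpolate S w (fun p => (g j).eval (w p)) with hL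
  have hLb : ∀ v : ℂ, ‖v‖ ≤ 1 → ‖L.eval v‖ ≤ δ j := by
    intro v hv
    rw [hL, Lagrange.interpolate_apply, eval_finset_sum]
    refine (norm_sum_le _ _).trans (Finset.sum_le_sum fun p _ => ?_)
    rw [eval_mul, eval_C, norm_mul]
    exact mul_le_mul_of_nonneg_left (hK _ v hv) (norm_nonneg _)
  have hj1 : δ j < 1 := hj.trans_le (min_le_left _ _)
  have hj2 : δ j < ε / 4 := hj.trans_le (min_le_right _ _)
  have h1 := aux_schwarz (g j - L) 2 (by
    intro v hv
    rw [eval_sub]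
    refine (norm_sub_le _ _).trans ?_
    linarith [hg j v hv.le, hLb v hv.le]) w hwd S (by
    intro p hp
    rw [eval_sub, hL, Lagrange.eval_interpolate_at_node _ hwd.injOn hp, sub_self]) u hu.le
  have h2 : ‖(g j - L).eval u‖ ≤ ε / 2 := by
    refine le_of_mul_le_mul_right ?_ hpos
    linarith
  rw [eval_sub] at h2
  have h3 := norm_sub_norm_le ((g j).eval u) (L.eval u)
  linarith [hLb u hu.le]

open Polynomial in
lemma aux_lip (g : Polynomial ℂ) (hg : ∀ u : ℂ, ‖u‖ ≤ 1 → ‖g.eval u‖ ≤ 1) (a u : ℂ)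
    (ha : ‖a‖ < 1) (hu : ‖u‖ ≤ 1) :
    ‖g.eval a‖ ≤ ‖g.eval u‖ + 2 / (1 - ‖a‖) * ‖u - a‖ := by
  have hdvd : (X - C a) ∣ (g - C (g.eval a)) := Polynomial.dvd_iff_isRoot.mpr (by simp)
  obtain ⟨Q, hQ⟩ := hdvd
  have key := aux_max (Q * (1 - C (starRingEnd ℂ a) * X)) 2 (by
    intro v hv
    have : ‖(g - C (g.eval a)).eval v‖ ≤ 2 := by
      rw [eval_sub, eval_C]
      refine (norm_sub_le _ _).trans ?_
      linarith [hg v hv.le, hg a ha.le]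
    rw [hQ] at this
    simp only [eval_mul, eval_sub, eval_one, eval_C, eval_X, norm_mul (eval v Q),
      norm_mul (v - a)] at this ⊢
    rw [aux_circle _ _ hv]
    linarith) u hu
  simp only [eval_mul, eval_sub, eval_one, eval_C, eval_X, norm_mul (eval u Q)] at key
  have h1 : ‖g.eval u - g.eval a‖ = ‖u - a‖ * ‖Q.eval u‖ := by
    have := congrArg (eval u) hQ
    simp only [eval_mul, eval_sub, eval_C, eval_X] at this
    rw [this, norm_mul]
  have hp : 0 < 1 - ‖a‖ := by linarith
  have h2 : ‖Q.eval u‖ ≤ 2 / (1 - ‖a‖) := by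
    rw [le_div_iff₀ hp]
    exact (mul_le_mul_of_nonneg_left (aux_den a u ha hu) (norm_nonneg _)).trans key
  have h3 := norm_sub_norm_le (g.eval a) (g.eval u)
  rw [norm_sub_rev, h1] at h3
  nlinarith [mul_le_mul_of_nonneg_left h2 (norm_nonneg (u - a))]

lemma aux_index (z : ℕ → ℂ) (a : ℂ) (h : AccPt a (Filter.principal (Set.range z))) (n : ℕ) :
    ∃ k, n ≤ k ∧ ‖z k - a‖ < 1 / ((n : ℝ) + 1) := by
  rw [accPt_iff_nhds] at h
  have hfin : ((z '' Set.Iio n) \ {a}).Finite := ((Set.finite_Iio n).image z).subset Set.sdiff_subset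
  have hU : Metric.ball a (1 / ((n : ℝ) + 1)) ∩ ((z '' Set.Iio n) \ {a})ᶜ ∈ 𝓝 a := by
    refine inter_mem (Metric.ball_mem_nhds _ (by positivity)) ?_
    exact hfin.isClosed.isOpen_compl.mem_nhds (by simp)
  obtain ⟨y, ⟨⟨hy1, hy2⟩, k, rfl⟩, hne⟩ := h _ hU
  refine ⟨k, ?_, by simpa [dist_eq_norm] using hy1⟩
  by_contra hk
  exact hy2 ⟨⟨k, by simpa using hk, rfl⟩, hne⟩

section
variable {H : Type*} [NormedAddCommGroup H] [InnerProductSpace ℂ H] [CompleteSpace H]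

lemma aux_diag (e : HilbertBasis ℕ ℂ H) (s : ℕ → ℂ) (A : H →L[ℂ] H)
    (hA : ∀ j, A (e j) = s j • e j) (v : H) (k : ℕ) :
    inner ℂ (e k) (A v) = s k * inner ℂ (e k) v := by
  have h1 := ((e.hasSum_repr v).mapL A).mapL (innerSL ℂ (e k))
  have h2 : HasSum (fun i => (innerSL ℂ (e k)) (A (e.repr v i • e i)))
      ((innerSL ℂ (e k)) (A (e.repr v k • e k))) := by
    refine hasSum_single k fun i hi => ?_
    simp [hA, inner_smul_right, e.orthonormal.2 hi.symm]
  have h3 := h1.unique h2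
  simp [hA, inner_smul_right, e.repr_apply_apply, e.orthonormal.1 k] at h3
  rw [h3]; ring

open Polynomial in
lemma aux_aeval (e : HilbertBasis ℕ ℂ H) (z : ℕ → ℂ) (T : H →L[ℂ] H)
    (hT : ∀ j, T (e j) = z j • e j) (p : Polynomial ℂ) (j : ℕ) :
    (Polynomial.aeval T p) (e j) = (p.eval (z j)) • e j := by
  induction p using Polynomial.induction_on' with
  | add p q hp hq => simp [hp, hq, add_smul]
  | monomial n a =>
    have : ∀ n : ℕ, (T ^ n) (e j) = (z j ^ n) • e j := by
      intro n
      induction n with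
      | zero => simp
      | succ n ih => rw [pow_succ]; simp [hT, ih, smul_smul, pow_succ, mul_comm]
    rw [Polynomial.aeval_monomial, Polynomial.eval_monomial]
    simp [this, smul_smul, Algebra.algebraMap_eq_smul_one]

lemma aux_coord (e : HilbertBasis ℕ ℂ H) (v : H) :
    Tendsto (fun k => inner ℂ (e k) v) atTop (𝓝 0) := by
  have h := (e.orthonormal.inner_products_summable v).tendsto_atTop_zero
  rw [tendsto_zero_iff_norm_tendsto_zero]
  have := (Real.continuous_sqrt.tendsto 0).comp h
  simpa [Function.comp_def, Real.sqrt_sq] using this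
end

/-- Let `T = diag(z_j)` be a diagonal operator with distinct diagonal entries in the open
unit disc accumulating at every point of the unit circle. If there is a sequence `(w_p)` of
distinct cluster points of `{z_j}` in the open unit disc with `∑ (1 − |w_p|) = ∞`, then the
unital algebra `𝓡 = {p(T)}` is not localizing. -/
theorem diagonal_algebra_not_localizing_of_nonBlaschke_cluster_points
    {H : Type*} [NormedAddCommGroup H] [InnerProductSpace ℂ H] [CompleteSpace H]
    (e : HilbertBasis ℕ ℂ H) (z : ℕ → ℂ) (hzd : Function.Injective z)
    (hz : ∀ j, ‖z j‖ < 1)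
    (hsphere : Metric.sphere (0 : ℂ) 1 ⊆ closure (Set.range z))
    (T : H →L[ℂ] H) (hT : ∀ j, T (e j) = z j • e j)
    (w : ℕ → ℂ) (hwd : Function.Injective w) (hw1 : ∀ p, ‖w p‖ < 1)
    (hacc : ∀ p, AccPt (w p) (Filter.principal (Set.range z)))
    (hsum : ¬ Summable fun p => 1 - ‖w p‖) :
    ¬ IsLocalizing {X : H →L[ℂ] H | ∃ p : Polynomial ℂ, X = Polynomial.aeval T p} := by
  rintro ⟨c, r, hr, -, hB⟩
  choose k hkn hkz using fun p n => aux_index z (w p) (hacc p) n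
  set a : ℕ → ℝ := fun p => r / 2 / 2 ^ p with ha
  have ha0 : ∀ p, 0 < a p := fun p => by simp only [ha]; positivity
  set d : ℕ → H := fun n => ∑ p ∈ Finset.range (n + 1), ((a p : ℂ)) • e (k p n) with hd
  have hdn : ∀ n, ‖d n‖ ≤ r := by
    intro n
    refine (norm_sum_le _ _).trans ?_
    have : ∀ p ∈ Finset.range (n + 1), ‖((a p : ℂ)) • e (k p n)‖ = a p := by
      intro p _
      rw [norm_smul, e.orthonormal.1, mul_one, Complex.norm_real, Real.norm_of_nonneg (ha0 p).le]
    rw [Finset.sum_congr rfl this]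
    exact sum_le_hasSum _ (fun p _ => (ha0 p).le) (hasSum_geometric_two' r)
  have hdc : ∀ p n, p ≤ n → a p ≤ ‖inner ℂ (e (k p n)) (d n)‖ := by
    intro p n hpn
    have h1 : inner ℂ (e (k p n)) (d n) = ((∑ q ∈ Finset.range (n + 1),
        (if k p n = k q n then a q else 0) : ℝ) : ℂ) := by
      simp only [hd, inner_sum, inner_smul_right, orthonormal_iff_ite.mp e.orthonormal]
      push_cast
      refine Finset.sum_congr rfl fun q _ => ?_
      split_ifs <;> simp
    rw [h1, Complex.norm_real]
    refine le_trans ?_ (le_abs_self _)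
    have := Finset.single_le_sum (f := fun q => if k p n = k q n then a q else 0)
      (s := Finset.range (n + 1)) (fun q _ => by split_ifs <;> simp [(ha0 q).le])
      (Finset.mem_range.mpr (Nat.lt_succ_of_le hpn))
    simpa using this
  obtain ⟨n, X, y, hn, hX, hX1, hy, hlim⟩ := hB (fun n => c + d n) (fun n => by
    simpa [dist_eq_norm] using hdn n)
  choose g hg using hX
  have hcoord : ∀ j v m, inner ℂ (e m) (X j v) = (g j).eval (z m) * inner ℂ (e m) v := by
    intro j v m
    rw [hg j]
    exact aux_diag e (fun m => (g j).eval (z m)) _ (aux_aeval e z T hT (g j)) v m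
  have hgz : ∀ j m, ‖(g j).eval (z m)‖ ≤ 1 := by
    intro j m
    have h1 := (X j).le_of_opNorm_le (hX1 j) (e m)
    rw [hg j, aux_aeval e z T hT, norm_smul, e.orthonormal.1] at h1
    simpa using h1
  have hg1 : ∀ j, ∀ u : ℂ, ‖u‖ ≤ 1 → ‖(g j).eval u‖ ≤ 1 := by
    intro j
    refine aux_max (g j) 1 ?_
    intro u hu
    have hcl : IsClosed {u : ℂ | ‖(g j).eval u‖ ≤ 1} :=
      isClosed_le (g j).continuous.norm continuous_const
    refine closure_minimal ?_ hcl (hsphere (by simpa using hu))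
    rintro _ ⟨m, rfl⟩
    exact hgz j m
  have hnt := hn.tendsto_atTop
  have h0 : ∀ p, Tendsto (fun j => (g j).eval (w p)) atTop (𝓝 0) := by
    intro p
    have hk : Tendsto (fun j => k p (n j)) atTop atTop :=
      tendsto_atTop_mono (fun j => hkn p (n j)) hnt
    have hc0 := ((aux_coord e c).comp hk).norm
    have hy0 := ((aux_coord e y).comp hk).norm
    have hxy := (tendsto_iff_norm_sub_tendsto_zero.mp hlim)
    simp only [norm_zero, Function.comp_def] at hc0 hy0
    have hE : Tendsto (fun j => (‖X j (c + d (n j)) - y‖ + ‖inner ℂ (e (k p (n j))) y‖) /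
        (a p / 2)) atTop (𝓝 0) := by
      simpa using (hxy.add hy0).div_const (a p / 2)
    have hzw : Tendsto (fun j => ‖z (k p (n j)) - w p‖) atTop (𝓝 0) := by
      refine squeeze_zero (fun _ => norm_nonneg _) (fun j => (hkz p (n j)).le) ?_
      exact (tendsto_one_div_add_atTop_nhds_zero_nat (𝕜 := ℝ)).comp hnt
    have hF := hE.add (hzw.const_mul (2 / (1 - ‖w p‖)))
    rw [mul_zero, add_zero] at hF
    refine squeeze_zero_norm' ?_ hF
    filter_upwards [hc0.eventually (gt_mem_nhds (half_pos (ha0 p))), hnt.eventually_ge_atTop p]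
      with j hj1 hj2
    refine (aux_lip (g j) (hg1 j) (w p) (z (k p (n j))) (hw1 p) (hz _).le).trans ?_
    gcongr
    rw [le_div_iff₀ (half_pos (ha0 p))]
    have h1 : a p / 2 ≤ ‖inner ℂ (e (k p (n j))) (c + d (n j))‖ := by
      rw [inner_add_right, add_comm]
      have := norm_sub_le_norm_add (inner ℂ (e (k p (n j))) (d (n j)))
        (inner ℂ (e (k p (n j))) c)
      linarith [hdc p (n j) hj2]
    have h2 : ‖inner ℂ (e (k p (n j))) (X j (c + d (n j)))‖ ≤
        ‖X j (c + d (n j)) - y‖ + ‖inner ℂ (e (k p (n j))) y‖ := by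
      have h3 := norm_inner_le_norm (𝕜 := ℂ) (e (k p (n j))) (X j (c + d (n j)) - y)
      rw [e.orthonormal.1, one_mul, inner_sub_right] at h3
      have := norm_sub_norm_le (inner ℂ (e (k p (n j))) (X j (c + d (n j))))
        (inner ℂ (e (k p (n j))) y)
      linarith
    rw [hcoord, norm_mul] at h2
    exact (mul_le_mul_of_nonneg_left h1 (norm_nonneg _)).trans h2
  apply hy
  have hy' : ∀ m, inner ℂ (e m) y = 0 := by
    intro m
    have h1 : Tendsto (fun j => inner ℂ (e m) (X j (c + d (n j)))) atTop (𝓝 (inner ℂ (e m) y)) :=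
      ((innerSL ℂ (e m)).continuous.tendsto y).comp hlim
    refine tendsto_nhds_unique h1 ?_
    have h2 := (aux_limit w hwd hw1 hsum g hg1 h0 (z m) (hz m)).norm.mul_const (‖c‖ + r)
    rw [norm_zero, zero_mul] at h2
    refine squeeze_zero_norm (fun j => ?_) h2
    rw [hcoord, norm_mul]
    refine mul_le_mul_of_nonneg_left ?_ (norm_nonneg _)
    have h3 := norm_inner_le_norm (𝕜 := ℂ) (e m) (c + d (n j))
    rw [e.orthonormal.1, one_mul] at h3
    linarith [norm_add_le c (d (n j)), hdn (n j)]
  have : e.repr y = 0 := by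
    ext m
    rw [e.repr_apply_apply, hy' m]; simp
  simpa using this
end
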